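/- (Theorem 2.) Let K be an imaginary quadratic number field, with ring of integers O_K, discriminant D_K, and for x ∈ O_K ∖ {0} let d_K(x) = Card{e ∈ O_K ∖ {0} : e ∣ x}. Let ζ_K(2) = ∑_𝔞 (N𝔞)^{−2}, the sum ranging over all nonzero ideals 𝔞 of O_K, where N𝔞 = [O_K : 𝔞]. Then, as X → +∞, ∑ d_K(x)·d_K(x+1) taken over all x ∈ O_K ∖ {0, −1} with |N_{K/ℚ}(x)| ≤ X equals (8π³ / (|D_K|^{3/2} ζ_K(2))) · X (log X)² + O(X log X). -/

import Mathlib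

open scoped NumberField

/-- The naive number-of-divisors function on the ring of integers of a number field:
`dK x` is the number of nonzero divisors of `x`. -/
noncomputable def dK (K : Type*) [Field K] [NumberField K] (x : 𝓞 K) : ℕ :=
  {e : 𝓞 K | e ≠ 0 ∧ e ∣ x}.ncard

/-- The value `ζ_K(2) = ∑_𝔞 (N𝔞)⁻²`, the sum ranging over the nonzero ideals of `𝓞 K`. -/
noncomputable def zetaKTwo (K : Type*) [Field K] [NumberField K] : ℝ :=
  ∑' I : {I : Ideal (𝓞 K) // I ≠ ⊥}, ((Ideal.absNorm (I : Ideal (𝓞 K)) : ℝ) ^ 2)⁻¹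

/-!
Dirichlet's hyperbola method: pairing each divisor `e` of `x` with `x / e` shows that, up to
divisors counted twice, `d_K(x)` is twice the number of divisors of norm at most `Y = √X + 1`. The
sum over `x` thus becomes a sum over pairs `(e, f)` of such small divisors of the number of `x` with
`e ∣ x` and `f ∣ x + 1`. This forces `e` and `f` to be coprime, and then `x` runs over a coset of
the ideal `(e f)`. Counting lattice points in a disc gives `2πX / √|D_K|` over the norm of the ideal
for such a coset; the error is uniform over all ideals because the class group is finite, so that up
to homothety only finitely many lattices occur.

There remains the sum of `1 / N(e f)` over coprime pairs. Coprimality is detected by inclusion and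
exclusion over the finite sets of primes dividing both `e` and `f`, i.e. by Möbius inversion over
squarefree ideals. The sum over multiples of an ideal is `2π / √|D_K|` times a logarithm by partial
summation, and the sum of `μ(𝔞) / N(𝔞)²` is `1 / ζ_K(2)`.
-/

section LatticePoints

open MeasureTheory Metric Module

section Cells

variable {E : Type*} [NormedAddCommGroup E] [NormedSpace ℝ E] {ι : Type*} [Fintype ι]
  (b : Basis ι ℝ E)

/-- The points whose lattice cell has its corner in `closedBall z r`, that is, the union of the
translates of the fundamental domain by the lattice points in that ball. -/
def cellsInBall (z : E) (r : ℝ) : Set E :=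
  {x | (ZSpan.floor b x : E) ∈ closedBall z r}

lemma floor_eq_iff_mem_fundamentalDomain {v : E} (hv : v ∈ Submodule.span ℤ (Set.range b))
    (x : E) : (ZSpan.floor b x : E) = v ↔ -v + x ∈ ZSpan.fundamentalDomain b := by
  rw [← ZSpan.fract_eq_self, ZSpan.fract_zSpan_add b x (neg_mem hv), ZSpan.fract_apply,
    neg_add_eq_sub, sub_right_inj]

lemma norm_sub_floor_le (x : E) : ‖x - ZSpan.floor b x‖ ≤ ∑ i, ‖b i‖ := by
  rw [← ZSpan.fract_apply]
  exact ZSpan.norm_fract_le b x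

lemma cellsInBall_subset_closedBall (z : E) (r : ℝ) :
    cellsInBall b z r ⊆ closedBall z (r + ∑ i, ‖b i‖) := fun x hx ↦ by
  rw [add_comm, mem_closedBall, dist_eq_norm]
  rw [cellsInBall, Set.mem_ofPred_eq, mem_closedBall, dist_eq_norm] at hx
  exact (norm_sub_le_norm_sub_add_norm_sub x (ZSpan.floor b x : E) z).trans
    (add_le_add (norm_sub_floor_le b x) hx)

lemma closedBall_subset_cellsInBall (z : E) (r : ℝ) :
    closedBall z (r - ∑ i, ‖b i‖) ⊆ cellsInBall b z r := fun x hx ↦ by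
  rw [mem_closedBall, dist_eq_norm] at hx
  rw [cellsInBall, Set.mem_ofPred_eq, mem_closedBall, dist_eq_norm]
  have hfloor := norm_sub_floor_le b x
  rw [norm_sub_rev] at hfloor
  linarith [norm_sub_le_norm_sub_add_norm_sub (ZSpan.floor b x : E) x z]

variable [FiniteDimensional ℝ E]

lemma cellsInBall_eq_biUnion (z : E) (r : ℝ) :
    cellsInBall b z r =
      ⋃ v ∈ (ZSpan.setFinite_inter b (isBounded_closedBall (x := z) (r := r))).toFinset,
        (fun x ↦ -v + x) ⁻¹' ZSpan.fundamentalDomain b := by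
  ext x
  simp only [Set.mem_iUnion, Set.mem_preimage, Set.Finite.mem_toFinset]
  constructor
  · exact fun hx ↦ ⟨ZSpan.floor b x, ⟨hx, SetLike.coe_mem _⟩,
      (floor_eq_iff_mem_fundamentalDomain b (SetLike.coe_mem _) x).1 rfl⟩
  · rintro ⟨v, hv, hx⟩
    rw [← floor_eq_iff_mem_fundamentalDomain b hv.2 x] at hx
    rw [cellsInBall, Set.mem_ofPred_eq, hx]
    exact hv.1

variable [MeasurableSpace E] [BorelSpace E] (μ : Measure E) [μ.IsAddHaarMeasure]

lemma measureReal_cellsInBall (z : E) (r : ℝ) :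
    μ.real (cellsInBall b z r) = (closedBall z r ∩ Submodule.span ℤ (Set.range b)).ncard *
      μ.real (ZSpan.fundamentalDomain b) := by
  have hfin := ZSpan.setFinite_inter b (isBounded_closedBall (x := z) (r := r))
  rw [cellsInBall_eq_biUnion, measureReal_biUnion_finset (h := ?finite),
    Set.ncard_eq_toFinset_card _ hfin, ← nsmul_eq_mul, ← Finset.sum_const]
  · refine Finset.sum_congr rfl fun v _ ↦ ?_
    rw [measureReal_def, measure_preimage_add, measureReal_def]
  · intro v hv w hw hvw
    rw [Set.Finite.coe_toFinset] at hv hw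
    refine Set.disjoint_left.2 fun x hx hx' ↦ hvw ?_
    rw [← (floor_eq_iff_mem_fundamentalDomain b hv.2 x).2 hx,
      (floor_eq_iff_mem_fundamentalDomain b hw.2 x).2 hx']
  · exact fun v _ ↦ (ZSpan.fundamentalDomain_measurableSet b).preimage (measurable_const_add _)
  · intro v _
    rw [measure_preimage_add]
    exact (ZSpan.fundamentalDomain_isBounded b).measure_lt_top.ne

lemma measureReal_cellsInBall_le (z : E) {r : ℝ} (hr : 0 ≤ r) :
    μ.real (cellsInBall b z r) ≤ (r + ∑ i, ‖b i‖) ^ finrank ℝ E * μ.real (ball 0 1) := by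
  rw [← Measure.addHaar_real_closedBall μ z (by positivity)]
  exact measureReal_mono (cellsInBall_subset_closedBall b z r)
    isBounded_closedBall.measure_lt_top.ne

lemma le_measureReal_cellsInBall [Nontrivial E] (z : E) (r : ℝ) :
    max (r - ∑ i, ‖b i‖) 0 ^ finrank ℝ E * μ.real (ball 0 1) ≤ μ.real (cellsInBall b z r) := by
  rcases le_total (r - ∑ i, ‖b i‖) 0 with hneg | hpos
  · rw [max_eq_right hneg, zero_pow finrank_pos.ne', zero_mul]
    exact measureReal_nonneg
  · rw [max_eq_left hpos, ← Measure.addHaar_real_closedBall μ z hpos]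
    exact measureReal_mono (closedBall_subset_cellsInBall b z r)
      ((isBounded_closedBall.subset (cellsInBall_subset_closedBall b z r)).measure_lt_top.ne)

end Cells

lemma abs_pow_sub_pow_le_of_abs_sub_le {x r δ : ℝ} (hr : 0 ≤ r) (hx : 0 ≤ x)
    (hδ : |x - r| ≤ δ) (d : ℕ) :
    |x ^ d - r ^ d| ≤ δ * d * (1 + δ) ^ (d - 1) * (r + 1) ^ (d - 1) := by
  have hδ0 : 0 ≤ δ := (abs_nonneg _).trans hδ
  have hmax : max |x| |r| ≤ (1 + δ) * (r + 1) := by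
    rw [abs_of_nonneg hx, abs_of_nonneg hr]
    have := (abs_le.1 hδ).2
    exact max_le (by nlinarith) (by nlinarith)
  calc |x ^ d - r ^ d| ≤ |x - r| * d * max |x| |r| ^ (d - 1) := abs_pow_sub_pow_le ..
    _ ≤ δ * d * ((1 + δ) * (r + 1)) ^ (d - 1) := by gcongr
    _ = δ * d * (1 + δ) ^ (d - 1) * (r + 1) ^ (d - 1) := by rw [mul_pow, ← mul_assoc]

theorem exists_abs_ncard_mul_measureReal_sub_le {E : Type*} [NormedAddCommGroup E]
    [NormedSpace ℝ E] [FiniteDimensional ℝ E] [Nontrivial E] [MeasurableSpace E] [BorelSpace E]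
    (μ : Measure E) [μ.IsAddHaarMeasure] {ι : Type*} [Finite ι] (b : Basis ι ℝ E) :
    ∃ C : ℝ, 0 ≤ C ∧ ∀ z : E, ∀ r : ℝ, 0 ≤ r →
      |(closedBall z r ∩ Submodule.span ℤ (Set.range b)).ncard *
          μ.real (ZSpan.fundamentalDomain b) - r ^ finrank ℝ E * μ.real (ball 0 1)| ≤
        C * (r + 1) ^ (finrank ℝ E - 1) := by
  cases nonempty_fintype ι
  set δ := ∑ i, ‖b i‖
  set d := finrank ℝ E
  set κ := μ.real (ball (0 : E) 1)
  have hδ : 0 ≤ δ := by positivity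
  have hκ : 0 ≤ κ := measureReal_nonneg
  refine ⟨δ * d * (1 + δ) ^ (d - 1) * κ, by positivity, fun z r hr ↦ ?_⟩
  have hupper : |(r + δ) ^ d - r ^ d| ≤ _ :=
    abs_pow_sub_pow_le_of_abs_sub_le hr (by positivity) (δ := δ) (by simp [abs_of_nonneg hδ]) d
  have hlower : |max (r - δ) 0 ^ d - r ^ d| ≤ _ :=
    abs_pow_sub_pow_le_of_abs_sub_le hr (le_max_right _ _) (δ := δ)
      (by rw [abs_le]; constructor <;> cases max_cases (r - δ) 0 <;> linarith) d
  have hle := measureReal_cellsInBall_le b μ z hr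
  have hge := le_measureReal_cellsInBall b μ z r
  rw [← measureReal_cellsInBall, abs_le]
  constructor
  · nlinarith [mul_le_mul_of_nonneg_right (abs_le.1 hlower).1 hκ]
  · nlinarith [mul_le_mul_of_nonneg_right (abs_le.1 hupper).2 hκ]

end LatticePoints

section FieldNorm

open NumberField

/-- The absolute value of the norm `N_{K/ℚ}`, as a real number. -/
noncomputable def normAbs (K : Type*) [Field K] [NumberField K] : K →*₀ ℝ where
  toFun x := |(Algebra.norm ℚ x : ℝ)|
  map_zero' := by simp
  map_one' := by simp
  map_mul' x y := by simp [abs_mul]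

variable {K : Type*} [Field K] [NumberField K]

lemma normAbs_apply (x : K) : normAbs K x = |(Algebra.norm ℚ x : ℝ)| := rfl

lemma normAbs_nonneg (x : K) : 0 ≤ normAbs K x := abs_nonneg _

lemma normAbs_pos {x : K} (hx : x ≠ 0) : 0 < normAbs K x :=
  (normAbs_nonneg x).lt_of_ne' ((map_ne_zero _).2 hx)

lemma normAbs_eq_absNorm_span (a : 𝓞 K) : normAbs K a = Ideal.absNorm (Ideal.span {a}) := by
  rw [Ideal.absNorm_span_singleton, normAbs_apply, ← Algebra.coe_norm_int, Nat.cast_natAbs]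
  simp

lemma one_le_normAbs {a : 𝓞 K} (ha : a ≠ 0) : 1 ≤ normAbs K a := by
  rw [normAbs_eq_absNorm_span, Nat.one_le_cast, Nat.one_le_iff_ne_zero, Ne,
    Ideal.absNorm_eq_zero_iff, Ideal.span_singleton_eq_bot]
  exact ha

lemma absNorm_cast_pos {I : Ideal (𝓞 K)} (hI : I ≠ ⊥) : 0 < (Ideal.absNorm I : ℝ) := by
  rw [Nat.cast_pos, Nat.pos_iff_ne_zero, Ne, Ideal.absNorm_eq_zero_iff]
  exact hI

lemma absNorm_le_normAbs {I : Ideal (𝓞 K)} {a : 𝓞 K} (ha : a ∈ I) (ha0 : a ≠ 0) :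
    Ideal.absNorm I ≤ normAbs K a := by
  have hpos := normAbs_pos (RingOfIntegers.coe_ne_zero_iff.2 ha0)
  rw [normAbs_eq_absNorm_span] at hpos ⊢
  exact_mod_cast Nat.le_of_dvd (mod_cast hpos)
    (Ideal.absNorm_dvd_absNorm_of_le ((Ideal.span_singleton_le_iff_mem I).2 ha))

lemma normAbs_div_of_span_mul_eq {I J : Ideal (𝓞 K)} {α β : 𝓞 K} (hI : I ≠ ⊥) (hβ : β ≠ 0)
    (h : Ideal.span {α} * I = Ideal.span {β} * J) :
    normAbs K ((α : K) / β) = Ideal.absNorm J / Ideal.absNorm I := by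
  have hβ' := (normAbs_pos (RingOfIntegers.coe_ne_zero_iff.2 hβ)).ne'
  have hI' := (absNorm_cast_pos hI).ne'
  rw [map_div₀, div_eq_div_iff hβ' hI', normAbs_eq_absNorm_span, normAbs_eq_absNorm_span]
  norm_cast
  rw [← map_mul, h, map_mul, mul_comm]

lemma ncard_coset_eq_of_span_mul_eq {I J : Ideal (𝓞 K)} {α β : 𝓞 K} (hI : I ≠ ⊥) (hα : α ≠ 0)
    (hβ : β ≠ 0) (h : Ideal.span {α} * I = Ideal.span {β} * J) (c : 𝓞 K) (R : ℝ) :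
    {x : 𝓞 K | x - c ∈ I ∧ normAbs K x ≤ R}.ncard =
      {a : 𝓞 K | a ∈ J ∧
        normAbs K (a + α / β * c) ≤ Ideal.absNorm J / Ideal.absNorm I * R}.ncard := by
  have hβK : (β : K) ≠ 0 := RingOfIntegers.coe_ne_zero_iff.2 hβ
  have hαβ : 0 < normAbs K ((α : K) / β) :=
    normAbs_pos (div_ne_zero (RingOfIntegers.coe_ne_zero_iff.2 hα) hβK)
  have hnorm {x a : 𝓞 K} (hxa : β * a = α * (x - c)) :
      normAbs K (a + α / β * c) ≤ Ideal.absNorm J / Ideal.absNorm I * R ↔ normAbs K x ≤ R := by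
    have hxa' : (β : K) * a = α * (x - c) := mod_cast congrArg (algebraMap (𝓞 K) K) hxa
    have : (a : K) + α / β * c = α / β * x := by
      field_simp
      linear_combination hxa'
    rw [this, map_mul, ← normAbs_div_of_span_mul_eq hI hβ h, mul_le_mul_iff_right₀ hαβ]
  have himage : (fun x : 𝓞 K ↦ α * (x - c)) '' {x | x - c ∈ I ∧ normAbs K x ≤ R} =
      (β * ·) '' {a : 𝓞 K | a ∈ J ∧
        normAbs K (a + α / β * c) ≤ Ideal.absNorm J / Ideal.absNorm I * R} := by
    apply Set.Subset.antisymm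
    · rintro _ ⟨x, ⟨hxI, hxR⟩, rfl⟩
      obtain ⟨a, ha, hax⟩ := Ideal.mem_span_singleton_mul.1
        (h ▸ Ideal.mul_mem_mul (Ideal.mem_span_singleton_self α) hxI)
      exact ⟨a, ⟨ha, (hnorm hax).2 hxR⟩, hax⟩
    · rintro _ ⟨a, ⟨haJ, haR⟩, rfl⟩
      obtain ⟨y, hy, hya⟩ := Ideal.mem_span_singleton_mul.1
        (h ▸ Ideal.mul_mem_mul (Ideal.mem_span_singleton_self β) haJ)
      have hya' : β * a = α * (y + c - c) := by rw [add_sub_cancel_right, hya]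
      exact ⟨y + c, ⟨by rwa [add_sub_cancel_right], (hnorm hya').1 haR⟩, hya'.symm⟩
  have hinj : Function.Injective fun x : 𝓞 K ↦ α * (x - c) :=
    (mul_right_injective₀ hα).comp sub_left_injective
  rw [← Set.ncard_image_of_injective _ hinj, himage,
    Set.ncard_image_of_injective _ (mul_right_injective₀ hβ)]

end FieldNorm

section CountingIntegers

open NumberField NumberField.mixedEmbedding NumberField.InfinitePlace MeasureTheory

/-- The average number of algebraic integers of an imaginary quadratic field per unit of norm. -/
noncomputable def latticeDensity (K : Type*) [Field K] [NumberField K] : ℝ :=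
  2 * Real.pi / √|(discr K : ℝ)|

variable {K : Type*} [Field K] [NumberField K]

lemma latticeDensity_pos : 0 < latticeDensity K := by
  have : (discr K : ℝ) ≠ 0 := mod_cast discr_ne_zero K
  unfold latticeDensity
  positivity

variable (K) in
lemma mixedEmbedding_coe_injective : Function.Injective fun a : 𝓞 K ↦ mixedEmbedding K a :=
  (mixedEmbedding K).injective.comp RingOfIntegers.coe_injective

variable [Algebra.IsQuadraticExtension ℚ K] [IsTotallyComplex K]

lemma nrComplexPlaces_eq_one : nrComplexPlaces K = 1 := by
  have h := IsTotallyComplex.finrank (K := K)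
  rw [Algebra.IsQuadraticExtension.finrank_eq_two] at h
  have := card_eq_nrRealPlaces_add_nrComplexPlaces K
  rw [IsTotallyComplex.nrRealPlaces_eq_zero] at this
  omega

lemma exists_univ_infinitePlace_eq_singleton :
    ∃ w : InfinitePlace K, (Finset.univ : Finset (InfinitePlace K)) = {w} := by
  rw [← Finset.card_eq_one, Finset.card_univ, card_eq_nrRealPlaces_add_nrComplexPlaces,
    IsTotallyComplex.nrRealPlaces_eq_zero, nrComplexPlaces_eq_one]

open Classical in
lemma normAbs_eq_norm_mixedEmbedding_sq (x : K) : normAbs K x = ‖mixedEmbedding K x‖ ^ 2 := by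
  obtain ⟨w, hw⟩ := exists_univ_infinitePlace_eq_singleton (K := K)
  have hnorm : |Algebra.norm ℚ x| = normAtPlace w (mixedEmbedding K x) ^ w.mult := by
    rw [← norm_eq_norm, mixedEmbedding.norm_apply, hw, Finset.prod_singleton]
  have hsup : ‖mixedEmbedding K x‖ = normAtPlace w (mixedEmbedding K x) := by
    rw [norm_eq_sup'_normAtPlace]
    simp [hw]
  rw [hsup, ← IsTotallyComplex.mult_eq w, ← hnorm, normAbs_apply, Rat.cast_abs]

lemma sqrt_normAbs_add_le (x y : K) :
    √(normAbs K (x + y)) ≤ √(normAbs K x) + √(normAbs K y) := by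
  classical
  simp only [normAbs_eq_norm_mixedEmbedding_sq, Real.sqrt_sq (norm_nonneg _), map_add]
  exact norm_add_le _ _

open Classical in
lemma volume_real_ball_mixedSpace :
    (volume : Measure (mixedSpace K)).real (Metric.ball 0 1) = Real.pi := by
  have hball : Metric.ball (0 : mixedSpace K) 1 = convexBodyLT K (fun _ ↦ 1) := by
    rw [convexBodyLT, show (0 : mixedSpace K) = (0, 0) from rfl, ← ball_prod_same,
      ball_pi _ one_pos, ball_pi _ one_pos]
    simp
  rw [measureReal_def, hball, convexBodyLT_volume, convexBodyLTFactor,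
    IsTotallyComplex.nrRealPlaces_eq_zero, nrComplexPlaces_eq_one]
  simp

open Classical in
lemma volume_real_fundamentalDomain_idealLattice (I : nonZeroDivisors (Ideal (𝓞 K))) :
    (volume : Measure (mixedSpace K)).real
      (ZSpan.fundamentalDomain (fractionalIdealLatticeBasis K (FractionalIdeal.mk0 K I))) =
      Real.pi * Ideal.absNorm (I : Ideal (𝓞 K)) / latticeDensity K := by
  rw [measureReal_def, volume_fundamentalDomain_fractionalIdealLatticeBasis,
    volume_fundamentalDomain_latticeBasis, nrComplexPlaces_eq_one, FractionalIdeal.coe_mk0,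
    FractionalIdeal.coeIdeal_absNorm, latticeDensity]
  simp only [ENNReal.toReal_mul, ENNReal.coe_toReal, Real.coe_sqrt, coe_nnnorm,
    Int.norm_eq_abs, pow_one, ENNReal.toReal_inv, ENNReal.toReal_ofNat, Rat.cast_natCast]
  rw [ENNReal.toReal_ofReal (by positivity)]
  have := Real.pi_pos.ne'
  field_simp

open Classical in
lemma mixedEmbedding_image_eq_closedBall_inter_span (I : nonZeroDivisors (Ideal (𝓞 K))) (z : K)
    {R : ℝ} (hR : 0 ≤ R) :
    (fun a : 𝓞 K ↦ mixedEmbedding K a) ''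
        {a | a ∈ (I : Ideal (𝓞 K)) ∧ normAbs K (a + z) ≤ R} =
      Metric.closedBall (-mixedEmbedding K z) √R ∩ Submodule.span ℤ
        (Set.range (fractionalIdealLatticeBasis K (FractionalIdeal.mk0 K I))) := by
  have hball (a : K) :
      mixedEmbedding K a ∈ Metric.closedBall (-mixedEmbedding K z) √R ↔ normAbs K (a + z) ≤ R := by
    rw [mem_closedBall_iff_norm, sub_neg_eq_add, ← map_add, Real.le_sqrt (norm_nonneg _) hR,
      normAbs_eq_norm_mixedEmbedding_sq]
  apply Set.Subset.antisymm
  · rintro _ ⟨a, ⟨haI, haR⟩, rfl⟩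
    exact ⟨(hball a).2 haR,
      (mem_span_fractionalIdealLatticeBasis K _).2 ⟨a, by simpa using haI, rfl⟩⟩
  · rintro v ⟨hv, hvI⟩
    obtain ⟨x, hx, rfl⟩ := (mem_span_fractionalIdealLatticeBasis K _).1 hvI
    rw [FractionalIdeal.coe_mk0] at hx
    obtain ⟨a, ha, rfl⟩ := (FractionalIdeal.mem_coeIdeal _).1 hx
    exact ⟨a, ⟨ha, (hball a).1 hv⟩, rfl⟩

variable (K) in
lemma finite_normAbs_le (R : ℝ) : {x : 𝓞 K | normAbs K x ≤ R}.Finite := by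
  classical
  rcases lt_or_ge R 0 with hR | hR
  · convert Set.finite_empty
    exact Set.eq_empty_of_forall_notMem fun x hx ↦ hR.not_ge ((normAbs_nonneg _).trans hx)
  · have h := mixedEmbedding_image_eq_closedBall_inter_span (1 : nonZeroDivisors (Ideal (𝓞 K))) 0 hR
    refine (Set.Finite.of_finite_image (h ▸ ZSpan.setFinite_inter _ Metric.isBounded_closedBall)
      (mixedEmbedding_coe_injective K).injOn).subset fun x hx ↦ ?_
    simpa using hx

lemma exists_abs_ncard_ideal_translate_sub_le (I : nonZeroDivisors (Ideal (𝓞 K))) :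
    ∃ C : ℝ, 0 ≤ C ∧ ∀ (z : K) (R : ℝ), 0 ≤ R →
      |{a : 𝓞 K | a ∈ (I : Ideal (𝓞 K)) ∧ normAbs K (a + z) ≤ R}.ncard -
        latticeDensity K * R / Ideal.absNorm (I : Ideal (𝓞 K))| ≤ C * (√R + 1) := by
  classical
  obtain ⟨C, hC, hcount⟩ := exists_abs_ncard_mul_measureReal_sub_le
    (volume : Measure (mixedSpace K)) (fractionalIdealLatticeBasis K (FractionalIdeal.mk0 K I))
  rw [volume_real_ball_mixedSpace, volume_real_fundamentalDomain_idealLattice,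
    mixedEmbedding.finrank, Algebra.IsQuadraticExtension.finrank_eq_two] at hcount
  have hN := absNorm_cast_pos (nonZeroDivisors.coe_ne_zero I)
  have hc := latticeDensity_pos (K := K)
  set V := Real.pi * Ideal.absNorm (I : Ideal (𝓞 K)) / latticeDensity K with hV
  have hV0 : 0 < V := by positivity
  refine ⟨C / V, by positivity, fun z R hR ↦ ?_⟩
  have h := hcount (-mixedEmbedding K z) √R (Real.sqrt_nonneg R)
  rw [← mixedEmbedding_image_eq_closedBall_inter_span I z hR,
    Set.ncard_image_of_injective _ (mixedEmbedding_coe_injective K), Real.sq_sqrt hR,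
    Nat.add_one_sub_one, pow_one] at h
  have hmain : latticeDensity K * R / Ideal.absNorm (I : Ideal (𝓞 K)) * V = R * Real.pi := by
    rw [hV]
    field_simp
  calc _ = |({a : 𝓞 K | a ∈ (I : Ideal (𝓞 K)) ∧ normAbs K (a + z) ≤ R}.ncard * V -
        R * Real.pi) / V| := by rw [← hmain, ← sub_mul, mul_div_cancel_right₀ _ hV0.ne']
    _ ≤ C * (√R + 1) / V := by rw [abs_div, abs_of_pos hV0]; gcongr
    _ = C / V * (√R + 1) := by ring

variable (K) in
theorem exists_abs_ncard_coset_sub_le :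
    ∃ C : ℝ, 0 ≤ C ∧ ∀ I : Ideal (𝓞 K), I ≠ ⊥ → ∀ (c : 𝓞 K) (R : ℝ), 0 ≤ R →
      |{x : 𝓞 K | x - c ∈ I ∧ normAbs K x ≤ R}.ncard - latticeDensity K * (R / Ideal.absNorm I)| ≤
        C * (√(R / Ideal.absNorm I) + 1) := by
  choose J hJ using ClassGroup.mk0_surjective (R := 𝓞 K)
  choose C hC hcount using fun Q ↦ exists_abs_ncard_ideal_translate_sub_le (J Q)
  let B (Q : ClassGroup (𝓞 K)) : ℝ := C Q * (√(Ideal.absNorm (J Q : Ideal (𝓞 K))) + 1)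
  have hB (Q) : 0 ≤ B Q := mul_nonneg (hC Q) (by positivity)
  refine ⟨∑ Q, B Q, Finset.sum_nonneg fun Q _ ↦ hB Q, fun I hI c R hR ↦ ?_⟩
  set Q := ClassGroup.mk0 ⟨I, mem_nonZeroDivisors_of_ne_zero hI⟩
  obtain ⟨α, β, hα, hβ, hαβ⟩ := ClassGroup.mk0_eq_mk0_iff.1 (hJ Q).symm
  set n : ℝ := (Ideal.absNorm (J Q : Ideal (𝓞 K)) : ℝ)
  have hn : 0 < n := absNorm_cast_pos (nonZeroDivisors.coe_ne_zero (J Q))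
  have h : |_ - latticeDensity K * (n / Ideal.absNorm I * R) / n| ≤ _ :=
    hcount Q (α / β * c) (n / Ideal.absNorm I * R) (by positivity)
  rw [← ncard_coset_eq_of_span_mul_eq hI hα hβ hαβ] at h
  calc _ = _ := by
        congr 2
        field_simp
    _ ≤ C Q * (√(n / Ideal.absNorm I * R) + 1) := h
    _ = C Q * (√n * √(R / Ideal.absNorm I) + 1) := by
        rw [← Real.sqrt_mul hn.le, div_mul_eq_mul_div, mul_div_assoc]
    _ ≤ B Q * (√(R / Ideal.absNorm I) + 1) := by
        rw [mul_assoc]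
        refine mul_le_mul_of_nonneg_left ?_ (hC Q)
        nlinarith [Real.sqrt_nonneg (R / Ideal.absNorm I), Real.sqrt_nonneg n]
    _ ≤ (∑ Q, B Q) * (√(R / Ideal.absNorm I) + 1) := by
        gcongr
        exact Finset.single_le_sum (fun Q _ ↦ hB Q) (Finset.mem_univ Q)

end CountingIntegers

section PartialSummation

open MeasureTheory Set

lemma setIntegral_indicator_inv_sq {w T : ℝ} (hw : 1 ≤ w) (hT : w ≤ T) :
    ∫ t in Icc 1 T, (Ici w).indicator (fun t ↦ (t ^ 2)⁻¹) t = w⁻¹ - T⁻¹ := by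
  rw [setIntegral_indicator measurableSet_Ici, ← Ici_inter_Iic, inter_right_comm, Ici_inter_Ici,
    sup_eq_right.2 hw, Ici_inter_Iic,
    integral_Icc_eq_integral_Ioc, ← intervalIntegral.integral_of_le hT]
  have hpos {t : ℝ} (ht : t ∈ uIcc w T) : t ≠ 0 := by
    rw [uIcc_of_le hT] at ht
    linarith [ht.1]
  rw [intervalIntegral.integral_eq_sub_of_hasDerivAt (f := fun t ↦ -t⁻¹)]
  · ring
  · intro t ht
    exact (hasDerivAt_inv (hpos ht)).neg.congr_deriv (neg_neg _)
  · exact (ContinuousOn.inv₀ (by fun_prop) fun t ht ↦ pow_ne_zero 2 (hpos ht)).intervalIntegrable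

variable {α : Type*} {s : Finset α} {w : α → ℝ} {T : ℝ}

lemma card_filter_mul_eq_sum_indicator (f : ℝ → ℝ) (t : ℝ) :
    ({x ∈ s | w x ≤ t} : Finset α).card * f t = ∑ x ∈ s, (Ici (w x)).indicator f t := by
  simp only [indicator_apply, mem_Ici, ← Finset.sum_filter, Finset.sum_const, nsmul_eq_mul]

lemma integrableOn_indicator_inv_sq (w T : ℝ) :
    IntegrableOn ((Ici w).indicator fun t : ℝ ↦ (t ^ 2)⁻¹) (Icc 1 T) := by
  refine (ContinuousOn.integrableOn_Icc ?_).indicator measurableSet_Ici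
  exact ContinuousOn.inv₀ (by fun_prop) fun t ht ↦ pow_ne_zero 2 (by linarith [ht.1])

lemma integrableOn_card_mul_inv_sq :
    IntegrableOn (fun t ↦ ({x ∈ s | w x ≤ t} : Finset α).card * (t ^ 2)⁻¹) (Icc 1 T) := by
  simp only [card_filter_mul_eq_sum_indicator fun t ↦ (t ^ 2)⁻¹]
  exact integrable_finsetSum _ fun x _ ↦ integrableOn_indicator_inv_sq (w x) T

lemma sum_inv_eq_card_div_add_integral (hw : ∀ x ∈ s, 1 ≤ w x) (hT : ∀ x ∈ s, w x ≤ T) :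
    ∑ x ∈ s, (w x)⁻¹ =
      s.card / T + ∫ t in Icc 1 T, ({x ∈ s | w x ≤ t} : Finset α).card * (t ^ 2)⁻¹ := by
  simp only [card_filter_mul_eq_sum_indicator fun t ↦ (t ^ 2)⁻¹]
  rw [integral_finsetSum _ fun x _ ↦ integrableOn_indicator_inv_sq (w x) T,
    Finset.sum_congr rfl fun x hx ↦ setIntegral_indicator_inv_sq (hw x hx) (hT x hx)]
  simp [div_eq_mul_inv]

lemma setIntegral_rpow_neg_three_halves_le (hT : 1 ≤ T) :
    ∫ t in Icc 1 T, t ^ (-3 / 2 : ℝ) ≤ 2 := by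
  rw [integral_Icc_eq_integral_Ioc, ← intervalIntegral.integral_of_le hT, integral_rpow]
  · norm_num
    have : 0 ≤ T ^ (-(1 / 2) : ℝ) := by positivity
    linarith
  · rw [uIcc_of_le hT]
    exact Or.inr ⟨by norm_num, fun h ↦ by linarith [h.1]⟩

lemma setIntegral_mul_inv_sq (c : ℝ) (hT : 1 ≤ T) :
    ∫ t in Icc 1 T, c * t * (t ^ 2)⁻¹ = c * Real.log T := by
  rw [setIntegral_congr_fun (g := fun t ↦ c * t⁻¹) measurableSet_Icc fun t ht ↦ ?_,
    integral_const_mul, integral_Icc_eq_integral_Ioc, ← intervalIntegral.integral_of_le hT,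
    integral_inv_of_pos one_pos (by linarith), div_one]
  have : t ≠ 0 := by linarith [ht.1]
  dsimp only
  field_simp

lemma abs_setIntegral_card_mul_inv_sq_sub_le {c C : ℝ} (hC : 0 ≤ C) (hT : 1 ≤ T)
    (hcard : ∀ t, 1 ≤ t → t ≤ T → |({x ∈ s | w x ≤ t} : Finset α).card - c * t| ≤ C * √t) :
    |(∫ t in Icc 1 T, ({x ∈ s | w x ≤ t} : Finset α).card * (t ^ 2)⁻¹) - c * Real.log T| ≤
      C * 2 := by
  have hpow : IntegrableOn (fun t : ℝ ↦ t ^ (-3 / 2 : ℝ)) (Icc 1 T) :=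
    ContinuousOn.integrableOn_Icc fun t ht ↦
      (Real.continuousAt_rpow_const _ _ (Or.inl (by linarith [ht.1]))).continuousWithinAt
  have hlin : IntegrableOn (fun t : ℝ ↦ c * t * (t ^ 2)⁻¹) (Icc 1 T) :=
    ContinuousOn.integrableOn_Icc (ContinuousOn.mul (by fun_prop)
      (ContinuousOn.inv₀ (by fun_prop) fun t ht ↦ pow_ne_zero 2 (by linarith [ht.1])))
  rw [← setIntegral_mul_inv_sq c hT, ← integral_sub integrableOn_card_mul_inv_sq hlin,
    ← Real.norm_eq_abs]
  refine (norm_integral_le_of_norm_le (hpow.const_mul C) ?_).trans ?_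
  · refine ae_restrict_of_forall_mem measurableSet_Icc fun t ht ↦ ?_
    have ht0 : 0 < t := by linarith [ht.1]
    rw [← sub_mul, norm_mul, Real.norm_eq_abs, Real.norm_of_nonneg (by positivity)]
    calc _ ≤ C * √t * (t ^ 2)⁻¹ := by gcongr; exact hcard t ht.1 ht.2
      _ = C * t ^ (-3 / 2 : ℝ) := by
        rw [Real.sqrt_eq_rpow, mul_assoc, ← Real.rpow_natCast, ← Real.rpow_neg ht0.le,
          ← Real.rpow_add ht0]
        norm_num
  · rw [integral_const_mul]
    exact mul_le_mul_of_nonneg_left (setIntegral_rpow_neg_three_halves_le hT) hC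

theorem abs_sum_inv_sub_mul_log_le {c C : ℝ} (hc : 0 ≤ c) (hC : 0 ≤ C) (hT : 1 ≤ T)
    (hw : ∀ x ∈ s, 1 ≤ w x) (hwT : ∀ x ∈ s, w x ≤ T)
    (hcard : ∀ t, 1 ≤ t → t ≤ T → |({x ∈ s | w x ≤ t} : Finset α).card - c * t| ≤ C * √t) :
    |∑ x ∈ s, (w x)⁻¹ - c * Real.log T| ≤ 3 * C + c := by
  have hT0 : 0 < T := by linarith
  have hboundary : |s.card / T - c| ≤ C := by
    have h := hcard T hT le_rfl
    rw [Finset.filter_true_of_mem hwT] at h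
    calc |s.card / T - c| = |s.card - c * T| / T := by
          rw [← abs_of_pos hT0, ← abs_div, abs_of_pos hT0, sub_div,
            mul_div_cancel_right₀ c hT0.ne']
      _ ≤ C * √T / T := by gcongr
      _ ≤ C := by
          rw [div_le_iff₀ hT0]
          exact mul_le_mul_of_nonneg_left ((Real.sqrt_le_left hT0.le).2 (by nlinarith)) hC
  have hintegral := abs_setIntegral_card_mul_inv_sq_sub_le hC hT hcard
  rw [sum_inv_eq_card_div_add_integral hw hwT, abs_le]
  rw [abs_le] at hboundary hintegral
  constructor <;> linarith [hboundary.1, hboundary.2, hintegral.1, hintegral.2]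

end PartialSummation

section NormBall

open NumberField

variable {K : Type*} [Field K] [NumberField K] [Algebra.IsQuadraticExtension ℚ K]
  [IsTotallyComplex K]

variable (K) in
/-- The nonzero algebraic integers of norm at most `Y`. -/
noncomputable def normBall (Y : ℝ) : Finset (𝓞 K) :=
  ((finite_normAbs_le K Y).subset fun _ hx ↦ hx.2 :
    {x : 𝓞 K | x ≠ 0 ∧ normAbs K x ≤ Y}.Finite).toFinset

lemma mem_normBall {Y : ℝ} {x : 𝓞 K} : x ∈ normBall K Y ↔ x ≠ 0 ∧ normAbs K x ≤ Y :=
  Set.Finite.mem_toFinset _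

open Classical in
/-- The sum of `1 / N e` over the nonzero elements `e` of an ideal with `N e ≤ Y`. -/
noncomputable def invNormSum (I : Ideal (𝓞 K)) (Y : ℝ) : ℝ :=
  ∑ e ∈ normBall K Y with e ∈ I, (normAbs K e)⁻¹

lemma invNormSum_top (Y : ℝ) :
    invNormSum (⊤ : Ideal (𝓞 K)) Y = ∑ e ∈ normBall K Y, (normAbs K e)⁻¹ := by
  simp [invNormSum]

lemma invNormSum_eq_zero_of_lt {I : Ideal (𝓞 K)} {Y : ℝ} (hY : Y < Ideal.absNorm I) :
    invNormSum I Y = 0 := by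
  classical
  refine Finset.sum_eq_zero fun e he ↦ ?_
  obtain ⟨he, heI⟩ := Finset.mem_filter.1 he
  rw [mem_normBall] at he
  linarith [absNorm_le_normAbs heI he.1, he.2]

open Classical in
lemma ncard_mem_normAbs_le_eq (I : Ideal (𝓞 K)) {Y : ℝ} (hY : 0 ≤ Y) :
    {x : 𝓞 K | x - 0 ∈ I ∧ normAbs K x ≤ Y}.ncard =
      ({e ∈ normBall K Y | e ∈ I} : Finset (𝓞 K)).card + 1 := by
  have hinsert : {x : 𝓞 K | x - 0 ∈ I ∧ normAbs K x ≤ Y} =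
      insert 0 ({e ∈ normBall K Y | e ∈ I} : Finset (𝓞 K)) := by
    ext x
    rcases eq_or_ne x 0 with rfl | hx
    · simpa
    · simp [mem_normBall, hx, and_comm]
  rw [hinsert, Set.ncard_coe_finset, Finset.card_insert_of_notMem (by simp [mem_normBall])]

variable (K) in
open Classical in
theorem exists_abs_card_normBall_inter_sub_le :
    ∃ C : ℝ, 0 ≤ C ∧ ∀ I : Ideal (𝓞 K), I ≠ ⊥ → ∀ Y : ℝ, Ideal.absNorm I ≤ Y →
      |({e ∈ normBall K Y | e ∈ I} : Finset (𝓞 K)).card -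
        latticeDensity K * (Y / Ideal.absNorm I)| ≤ C * √(Y / Ideal.absNorm I) := by
  obtain ⟨C, hC, hcount⟩ := exists_abs_ncard_coset_sub_le K
  refine ⟨2 * C + 1, by positivity, fun I hI Y hY ↦ ?_⟩
  have hn := absNorm_cast_pos hI
  have hsqrt : 1 ≤ √(Y / Ideal.absNorm I) :=
    Real.one_le_sqrt.2 ((one_le_div₀ hn).2 hY)
  have h := hcount I hI 0 Y (hn.le.trans hY)
  rw [ncard_mem_normAbs_le_eq I (hn.le.trans hY), Nat.cast_add_one, abs_le] at h
  rw [abs_le]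
  constructor <;> nlinarith [h.1, h.2]

variable (K) in
lemma exists_abs_absNorm_mul_invNormSum_sub_log_div_le :
    ∃ A : ℝ, 0 ≤ A ∧ ∀ I : Ideal (𝓞 K), I ≠ ⊥ → ∀ Y : ℝ, Ideal.absNorm I ≤ Y →
      |Ideal.absNorm I * invNormSum I Y - latticeDensity K * Real.log (Y / Ideal.absNorm I)| ≤
        A := by
  classical
  obtain ⟨C, hC, hcount⟩ := exists_abs_card_normBall_inter_sub_le K
  have hc := latticeDensity_pos (K := K)
  refine ⟨3 * C + latticeDensity K, by positivity, fun I hI Y hY ↦ ?_⟩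
  have hn := absNorm_cast_pos hI
  set n : ℝ := (Ideal.absNorm I : ℝ)
  have hscale : n * invNormSum I Y = ∑ e ∈ normBall K Y with e ∈ I, (normAbs K e / n)⁻¹ := by
    simp only [invNormSum, Finset.mul_sum, inv_div, div_eq_mul_inv n]
  rw [hscale]
  refine abs_sum_inv_sub_mul_log_le hc.le hC ((one_le_div₀ hn).2 hY) (fun e he ↦ ?_)
    (fun e he ↦ ?_) fun t ht1 htT ↦ ?_
  · rw [Finset.mem_filter, mem_normBall] at he
    exact (one_le_div₀ hn).2 (absNorm_le_normAbs he.2 he.1.1)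
  · rw [Finset.mem_filter, mem_normBall] at he
    exact div_le_div_of_nonneg_right he.1.2 hn.le
  · rw [le_div_iff₀ hn] at htT
    have h := hcount I hI (t * n) (le_mul_of_one_le_left hn.le ht1)
    rw [mul_div_cancel_right₀ t hn.ne'] at h
    convert h using 5
    ext e
    simp only [Finset.mem_filter, mem_normBall, div_le_iff₀ hn]
    grind

variable (K) in
theorem exists_abs_absNorm_mul_invNormSum_sub_le :
    ∃ A : ℝ, 0 ≤ A ∧ ∀ I : Ideal (𝓞 K), I ≠ ⊥ → ∀ Y : ℝ, 1 ≤ Y →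
      |Ideal.absNorm I * invNormSum I Y - latticeDensity K * Real.log Y| ≤
        A * (1 + Real.log (Ideal.absNorm I)) := by
  obtain ⟨A, hA, hle⟩ := exists_abs_absNorm_mul_invNormSum_sub_log_div_le K
  have hc := latticeDensity_pos (K := K)
  refine ⟨A + latticeDensity K, by positivity, fun I hI Y hY ↦ ?_⟩
  have hn := absNorm_cast_pos hI
  have hlogn : 0 ≤ Real.log (Ideal.absNorm I) := Real.log_natCast_nonneg _
  have hAlog := mul_nonneg hA hlogn
  have hclog := mul_nonneg hc.le hlogn
  rcases lt_or_ge Y (Ideal.absNorm I) with hYn | hYn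
  · have hlog : Real.log Y ≤ Real.log (Ideal.absNorm I) := Real.log_le_log (by linarith) hYn.le
    rw [invNormSum_eq_zero_of_lt hYn, mul_zero, zero_sub, abs_neg,
      abs_of_nonneg (mul_nonneg hc.le (Real.log_nonneg hY))]
    nlinarith
  · have h := hle I hI Y hYn
    rw [Real.log_div (by linarith) hn.ne', abs_le] at h
    rw [abs_le]
    constructor <;> nlinarith [h.1, h.2]

end NormBall

section PrimeProducts

open IsDedekindDomain

variable {R : Type*} [CommRing R] [IsDedekindDomain R]

/-- The squarefree ideal with a given finite set of prime divisors. Sums over the squarefree ideals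
of `R`, weighted by the Möbius function, are written as sums over `s` weighted by
`(-1) ^ s.card`. -/
noncomputable def primeProd (s : Finset (HeightOneSpectrum R)) : Ideal R :=
  ∏ v ∈ s, v.asIdeal

lemma primeProd_ne_bot (s : Finset (HeightOneSpectrum R)) : primeProd s ≠ ⊥ :=
  Finset.prod_ne_zero_iff.2 fun v _ ↦ v.ne_bot

lemma asIdeal_dvd_primeProd_iff {s : Finset (HeightOneSpectrum R)} {v : HeightOneSpectrum R} :
    v.asIdeal ∣ primeProd s ↔ v ∈ s := by
  refine ⟨fun h ↦ ?_, Finset.dvd_prod_of_mem _⟩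
  obtain ⟨w, hw, hvw⟩ := (Prime.dvd_finsetProd_iff v.prime _).1 h
  rwa [HeightOneSpectrum.ext (associated_iff_eq.1 (v.prime.associated_of_dvd w.prime hvw))]

lemma primeProd_injective : Function.Injective (primeProd (R := R)) := fun s t hst ↦ by
  ext v
  rw [← asIdeal_dvd_primeProd_iff, hst, asIdeal_dvd_primeProd_iff]

lemma primeProd_dvd_iff {s : Finset (HeightOneSpectrum R)} {I : Ideal R} :
    primeProd s ∣ I ↔ ∀ v ∈ s, v.asIdeal ∣ I := by
  classical
  refine ⟨fun h v hv ↦ (asIdeal_dvd_primeProd_iff.2 hv).trans h, fun h ↦ ?_⟩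
  have himage : primeProd s = ∏ p ∈ s.image HeightOneSpectrum.asIdeal, p :=
    (Finset.prod_image (f := id) fun v _ w _ hvw ↦ HeightOneSpectrum.ext hvw).symm
  rw [himage]
  exact Finset.prod_primes_dvd _ (Finset.forall_mem_image.2 fun v _ ↦ v.prime)
    (Finset.forall_mem_image.2 h)

lemma forall_not_asIdeal_dvd_iff_eq_top {I : Ideal R} (hI : I ≠ ⊥) :
    (∀ v : HeightOneSpectrum R, ¬ v.asIdeal ∣ I) ↔ I = ⊤ := by
  constructor
  · contrapose!
    intro hne
    obtain ⟨M, hM, hIM⟩ := Ideal.exists_le_maximal I hne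
    exact ⟨⟨M, hM.isPrime, ne_bot_of_le_ne_bot hI hIM⟩, Ideal.dvd_iff_le.2 hIM⟩
  · rintro rfl v hv
    exact v.isPrime.ne_top (top_le_iff.1 (Ideal.dvd_iff_le.1 hv))

open Classical in
theorem hasSum_neg_one_pow_card_primeProd_dvd {I : Ideal R} (hI : I ≠ ⊥) :
    HasSum (fun s ↦ if primeProd s ∣ I then (-1 : ℝ) ^ s.card else 0)
      (if I = ⊤ then 1 else 0) := by
  have hfin : {v : HeightOneSpectrum R | v.asIdeal ∣ I}.Finite := Ideal.finite_factors hI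
  have hmem (s : Finset (HeightOneSpectrum R)) :
      s ∈ hfin.toFinset.powerset ↔ primeProd s ∣ I := by
    simp [primeProd_dvd_iff, Finset.subset_iff]
  have hempty : hfin.toFinset = ∅ ↔ I = ⊤ := by
    simp [← forall_not_asIdeal_dvd_iff_eq_top hI, Set.eq_empty_iff_forall_notMem]
  have hsum : ∑ s ∈ hfin.toFinset.powerset, (-1 : ℝ) ^ s.card = if I = ⊤ then 1 else 0 := by
    simp only [← hempty]
    exact_mod_cast congrArg (Int.cast : ℤ → ℝ)
      (Finset.sum_powerset_neg_one_pow_card (x := hfin.toFinset))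
  rw [← hsum, Finset.sum_congr rfl fun s hs ↦ (if_pos ((hmem s).1 hs)).symm]
  exact hasSum_sum_of_ne_finset_zero fun s hs ↦ if_neg (mt (hmem s).2 hs)

open Classical in
lemma hasSum_neg_one_pow_card_mem_primeProd {e : R} (he : e ≠ 0) (f : R) :
    HasSum (fun s ↦ if e ∈ primeProd s ∧ f ∈ primeProd s then (-1 : ℝ) ^ s.card else 0)
      (if IsCoprime e f then 1 else 0) := by
  have hbot : Ideal.span {e} ⊔ Ideal.span {f} ≠ ⊥ := fun h ↦
    he (Ideal.span_singleton_eq_bot.1 (sup_eq_bot_iff.1 h).1)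
  have htop : Ideal.span {e} ⊔ Ideal.span {f} = ⊤ ↔ IsCoprime e f := by
    rw [← Ideal.isCoprime_iff_sup_eq, Ideal.isCoprime_span_singleton_iff]
  simpa only [Ideal.dvd_iff_le, sup_le_iff, Ideal.span_singleton_le_iff_mem, htop] using
    hasSum_neg_one_pow_card_primeProd_dvd hbot

end PrimeProducts

section ZetaTwo

open NumberField IsDedekindDomain

lemma summable_comp_of_card_fiber_le {ι κ : Type*} [DecidableEq κ] {N : ι → κ} {a w : κ → ℝ}
    (hw : ∀ n, 0 ≤ w n) (ha : ∀ n, 0 ≤ a n) (hs : Summable fun n ↦ a n * w n)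
    (hcard : ∀ (u : Finset ι) (n : κ), (({i ∈ u | N i = n} : Finset ι).card : ℝ) ≤ a n) :
    Summable fun i ↦ w (N i) := by
  refine summable_of_sum_le (c := ∑' n, a n * w n) (fun i ↦ hw _) fun u ↦ ?_
  calc ∑ i ∈ u, w (N i)
      = ∑ n ∈ u.image N, ∑ i ∈ u with N i = n, w (N i) :=
        (Finset.sum_fiberwise_of_maps_to (fun _ ↦ Finset.mem_image_of_mem N) _).symm
    _ = ∑ n ∈ u.image N, ({i ∈ u | N i = n} : Finset ι).card * w n := by
        refine Finset.sum_congr rfl fun n _ ↦ ?_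
        rw [Finset.sum_congr rfl fun i hi ↦ congrArg w (Finset.mem_filter.1 hi).2,
          Finset.sum_const, nsmul_eq_mul]
    _ ≤ ∑ n ∈ u.image N, a n * w n :=
        Finset.sum_le_sum fun n _ ↦ mul_le_mul_of_nonneg_right (hcard u n) (hw n)
    _ ≤ ∑' n, a n * w n := hs.sum_le_tsum _ fun n _ ↦ mul_nonneg (ha n) (hw n)

lemma summable_mul_rpow_neg_of_sum_isBigO {f : ℕ → ℝ} (hf : ∀ n, 0 ≤ f n)
    (hsum : (fun n : ℕ ↦ ∑ k ∈ Finset.Icc 1 n, f k) =O[Filter.atTop] fun n ↦ (n : ℝ))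
    {s : ℝ} (hs : 1 < s) : Summable fun n : ℕ ↦ f n * (n : ℝ) ^ (-s) := by
  have h := LSeriesSummable_of_sum_norm_bigO_and_nonneg (s := (s : ℂ))
    (by simpa only [Real.rpow_one] using hsum) hf zero_le_one hs
  refine h.norm.congr fun n ↦ ?_
  rw [LSeries.norm_term_eq]
  split_ifs with hn
  · rw [hn, Nat.cast_zero, Real.zero_rpow (by linarith), mul_zero]
  · rw [Complex.ofReal_re, Real.rpow_neg (Nat.cast_nonneg n), div_eq_mul_inv, Complex.norm_real,
      Real.norm_of_nonneg (hf n)]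

variable (K : Type*) [Field K] [NumberField K]

lemma sum_card_absNorm_eq_eq_card (n : ℕ) :
    ∑ k ∈ Finset.Icc 1 n, Nat.card {I : Ideal (𝓞 K) // Ideal.absNorm I = k} =
      Nat.card {I : nonZeroDivisors (Ideal (𝓞 K)) // Ideal.absNorm (I : Ideal (𝓞 K)) ≤ n} := by
  rw [← add_left_inj 1, ← Ideal.card_norm_le_eq_card_norm_le_add_one,
    show Finset.Icc 1 n = Finset.Ioc 0 n from Finset.Icc_succ_left_eq_Ioc _ _,
    show 1 = Nat.card {I : Ideal (𝓞 K) // Ideal.absNorm I = 0} by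
      simp [Ideal.absNorm_eq_zero_iff],
    Finset.sum_Ioc_add_eq_sum_Icc n.zero_le,
    ← Finset.card_preimage_eq_sum_card_image_eq fun k _ ↦ Ideal.finite_setOfPred_absNorm_eq k]
  simp [Set.coe_eq_subtype]

lemma sum_card_absNorm_eq_isBigO :
    (fun n : ℕ ↦ ∑ k ∈ Finset.Icc 1 n,
      (Nat.card {I : Ideal (𝓞 K) // Ideal.absNorm I = k} : ℝ)) =O[Filter.atTop]
        fun n ↦ (n : ℝ) := by
  have hdiv := ((Ideal.tendsto_norm_le_div_atTop₀ K).comp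
    tendsto_natCast_atTop_atTop).isBigO_one ℝ
  refine (hdiv.mul (Asymptotics.isBigO_refl (fun n : ℕ ↦ (n : ℝ)) Filter.atTop)).congr' ?_
    (.of_forall fun n ↦ one_mul _)
  filter_upwards [Filter.eventually_ge_atTop 1] with n hn
  simp only [Function.comp_apply, Nat.cast_le]
  rw [div_mul_cancel₀ _ (Nat.cast_ne_zero.2 (Nat.one_le_iff_ne_zero.1 hn)), ← Nat.cast_sum,
    sum_card_absNorm_eq_eq_card]

theorem summable_absNorm_rpow_neg {s : ℝ} (hs : 1 < s) :
    Summable fun I : {I : Ideal (𝓞 K) // I ≠ ⊥} ↦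
      (Ideal.absNorm (I : Ideal (𝓞 K)) : ℝ) ^ (-s) := by
  refine summable_comp_of_card_fiber_le (w := fun n : ℕ ↦ (n : ℝ) ^ (-s))
    (N := fun I : {I : Ideal (𝓞 K) // I ≠ ⊥} ↦ Ideal.absNorm (I : Ideal (𝓞 K)))
    (fun n ↦ by positivity) (fun n ↦ Nat.cast_nonneg _)
    (summable_mul_rpow_neg_of_sum_isBigO (fun n ↦ Nat.cast_nonneg _)
      (sum_card_absNorm_eq_isBigO K) hs) fun u n ↦ ?_
  have : Finite {I : Ideal (𝓞 K) // Ideal.absNorm I = n} := Ideal.finite_setOfPred_absNorm_eq n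
  rw [Nat.cast_le, ← Nat.card_eq_finsetCard]
  refine Nat.card_le_card_of_injective (fun I ↦ ⟨I.1.1, (Finset.mem_filter.1 I.2).2⟩)
    fun I J hIJ ↦ Subtype.ext (Subtype.ext (Subtype.mk.inj hIJ))

lemma summable_inv_absNorm_sq :
    Summable fun I : {I : Ideal (𝓞 K) // I ≠ ⊥} ↦
      ((Ideal.absNorm (I : Ideal (𝓞 K)) : ℝ) ^ 2)⁻¹ := by
  refine (summable_absNorm_rpow_neg K one_lt_two).congr fun I ↦ ?_
  rw [Real.rpow_neg (Nat.cast_nonneg _), Real.rpow_two]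

variable {K} in
lemma summable_comp_primeProd {f : Ideal (𝓞 K) → ℝ}
    (hf : Summable fun I : {I : Ideal (𝓞 K) // I ≠ ⊥} ↦ f I) :
    Summable fun s : Finset (HeightOneSpectrum (𝓞 K)) ↦ f (primeProd s) := by
  have hinj : Function.Injective fun s : Finset (HeightOneSpectrum (𝓞 K)) ↦
      (⟨primeProd s, primeProd_ne_bot s⟩ : {I : Ideal (𝓞 K) // I ≠ ⊥}) :=
    fun _ _ hst ↦ primeProd_injective (congrArg Subtype.val hst)
  exact hf.comp_injective hinj

lemma summable_neg_one_pow_mul_inv_absNorm_primeProd_sq :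
    Summable fun s : Finset (HeightOneSpectrum (𝓞 K)) ↦
      (-1 : ℝ) ^ s.card * ((Ideal.absNorm (primeProd s) : ℝ) ^ 2)⁻¹ := by
  refine .of_norm_bounded (summable_comp_primeProd
    (f := fun I ↦ ((Ideal.absNorm I : ℝ) ^ 2)⁻¹) (summable_inv_absNorm_sq K)) fun s ↦ ?_
  simp

open Classical in
lemma hasSum_prod_primeProd_dvd :
    HasSum (fun p : Finset (HeightOneSpectrum (𝓞 K)) × {I : Ideal (𝓞 K) // I ≠ ⊥} ↦
        (if primeProd p.1 ∣ p.2 then (-1 : ℝ) ^ p.1.card else 0) *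
          ((Ideal.absNorm (p.2 : Ideal (𝓞 K)) : ℝ) ^ 2)⁻¹)
      ((∑' s : Finset (HeightOneSpectrum (𝓞 K)),
        (-1 : ℝ) ^ s.card * ((Ideal.absNorm (primeProd s) : ℝ) ^ 2)⁻¹) * zetaKTwo K) := by
  let g (p : Finset (HeightOneSpectrum (𝓞 K)) × {I : Ideal (𝓞 K) // I ≠ ⊥}) :
      Finset (HeightOneSpectrum (𝓞 K)) × {I : Ideal (𝓞 K) // I ≠ ⊥} :=
    (p.1, ⟨primeProd p.1 * p.2, mul_ne_zero (primeProd_ne_bot p.1) p.2.2⟩)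
  have hg : Function.Injective g := by
    rintro ⟨s, I, hI⟩ ⟨t, J, hJ⟩ h
    simp only [g, Prod.mk.injEq, Subtype.mk.injEq] at h
    obtain ⟨rfl, h⟩ := h
    obtain rfl := mul_left_cancel₀ (primeProd_ne_bot s) h
    rfl
  have hsummable := summable_neg_one_pow_mul_inv_absNorm_primeProd_sq K
  rw [← hg.hasSum_iff]
  · refine (hsummable.hasSum.mul (summable_inv_absNorm_sq K).hasSum
      (summable_mul_of_summable_norm hsummable.norm (summable_inv_absNorm_sq K).norm)).congr_fun
      fun p ↦ ?_
    simp only [g, Function.comp_apply, dvd_mul_right, if_true, map_mul, Nat.cast_mul, mul_pow,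
      mul_inv, mul_assoc]
  · rintro ⟨s, I, hI⟩ h
    refine mul_eq_zero_of_left (if_neg ?_) _
    rintro ⟨J, hJ : I = primeProd s * J⟩
    subst hJ
    exact h ⟨(s, ⟨J, right_ne_zero_of_mul hI⟩), rfl⟩

theorem tsum_neg_one_pow_mul_inv_absNorm_primeProd_sq :
    ∑' s : Finset (HeightOneSpectrum (𝓞 K)),
      (-1 : ℝ) ^ s.card * ((Ideal.absNorm (primeProd s) : ℝ) ^ 2)⁻¹ = (zetaKTwo K)⁻¹ := by
  classical
  have hfiber (I : {I : Ideal (𝓞 K) // I ≠ ⊥}) :=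
    (hasSum_neg_one_pow_card_primeProd_dvd I.2).mul_right
      ((Ideal.absNorm (I : Ideal (𝓞 K)) : ℝ) ^ 2)⁻¹
  have htotal := ((Equiv.prodComm _ _).hasSum_iff.2 (hasSum_prod_primeProd_dvd K)).prod_fiberwise
    hfiber
  refine eq_inv_of_mul_eq_one_left (htotal.unique ?_)
  refine (hasSum_ite_eq (⟨⊤, top_ne_bot⟩ : {I : Ideal (𝓞 K) // I ≠ ⊥}) 1).congr_fun fun I ↦ ?_
  rcases I with ⟨I, hI⟩
  by_cases h : I = ⊤ <;> simp [h]

end ZetaTwo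

section CoprimePairs

open NumberField IsDedekindDomain

lemma abs_sq_sub_sq_le {u v E : ℝ} (hv : 0 ≤ v) (h : |u - v| ≤ E) :
    |u ^ 2 - v ^ 2| ≤ E * (E + 2 * v) := by
  have hadd : |u - v + 2 * v| ≤ E + 2 * v :=
    (abs_add_le _ _).trans (add_le_add h (abs_of_nonneg (by positivity)).le)
  calc |u ^ 2 - v ^ 2| = |u - v| * |u - v + 2 * v| := by rw [← abs_mul]; ring_nf
    _ ≤ E * (E + 2 * v) := mul_le_mul h hadd (abs_nonneg _) ((abs_nonneg _).trans h)

lemma one_add_log_sq_le_sqrt {x : ℝ} (hx : 1 ≤ x) : (1 + Real.log x) ^ 2 ≤ 16 * √x := by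
  have hlog : Real.log x = 4 * Real.log √√x := by
    rw [Real.log_sqrt (by positivity), Real.log_sqrt (by positivity)]
    ring
  have hle : 1 + Real.log x ≤ 4 * √√x := by
    linarith [Real.log_le_sub_one_of_pos (x := √√x) (by positivity)]
  calc (1 + Real.log x) ^ 2 ≤ (4 * √√x) ^ 2 :=
        pow_le_pow_left₀ (by linarith [Real.log_nonneg hx]) hle 2
    _ = 16 * √x := by rw [mul_pow, Real.sq_sqrt (Real.sqrt_nonneg x)]; norm_num

lemma abs_sq_sub_mul_inv_sq_le_rpow {n L c l A : ℝ} (hn : 1 ≤ n) (hc : 0 ≤ c) (hl : 0 ≤ l)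
    (hA : 0 ≤ A) (h : |n * L - c * l| ≤ A * (1 + Real.log n)) :
    |L ^ 2 - c ^ 2 * l ^ 2 * (n ^ 2)⁻¹| ≤
      16 * A * (A + 2 * c) * (1 + l) * n ^ (-(3 / 2) : ℝ) := by
  have hn0 : 0 < n := by linarith
  have hlog := Real.log_nonneg hn
  have hrpow : n ^ (-(3 / 2) : ℝ) = √n * (n ^ 2)⁻¹ := by
    rw [Real.sqrt_eq_rpow, ← Real.rpow_natCast, ← Real.rpow_neg hn0.le, ← Real.rpow_add hn0]
    norm_num
  have hsq : |(n * L) ^ 2 - (c * l) ^ 2| ≤ A * (A + 2 * c) * (1 + l) * (1 + Real.log n) ^ 2 := by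
    refine (abs_sq_sub_sq_le (mul_nonneg hc hl) h).trans ?_
    have hprod : 0 ≤ A * (1 + Real.log n) := by positivity
    have hfactor : A * (1 + Real.log n) + 2 * (c * l) ≤
        (A + 2 * c) * (1 + l) * (1 + Real.log n) := by
      nlinarith [mul_nonneg hc hl, mul_nonneg hc hlog, mul_nonneg hA hl,
        mul_nonneg (mul_nonneg hA hl) hlog, mul_nonneg (mul_nonneg hc hl) hlog]
    exact (mul_le_mul_of_nonneg_left hfactor hprod).trans_eq (by ring)
  calc |L ^ 2 - c ^ 2 * l ^ 2 * (n ^ 2)⁻¹|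
      = |(n * L) ^ 2 - (c * l) ^ 2| * (n ^ 2)⁻¹ := by
        rw [← abs_of_pos (inv_pos.2 (pow_pos hn0 2)), ← abs_mul,
          abs_of_pos (inv_pos.2 (pow_pos hn0 2))]
        congr 1
        field_simp
    _ ≤ A * (A + 2 * c) * (1 + l) * (16 * √n) * (n ^ 2)⁻¹ := by
        gcongr
        exact hsq.trans (by gcongr; exact one_add_log_sq_le_sqrt hn)
    _ = 16 * A * (A + 2 * c) * (1 + l) * n ^ (-(3 / 2) : ℝ) := by rw [hrpow]; ring

variable {K : Type*} [Field K] [NumberField K] [Algebra.IsQuadraticExtension ℚ K]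
  [IsTotallyComplex K]

variable (K) in
open Classical in
/-- The sum of `1 / (N e * N f)` over the coprime pairs `(e, f)` of nonzero algebraic integers of
norm at most `Y`. -/
noncomputable def coprimeInvNormSum (Y : ℝ) : ℝ :=
  ∑ e ∈ normBall K Y, ∑ f ∈ normBall K Y,
    if IsCoprime e f then (normAbs K e)⁻¹ * (normAbs K f)⁻¹ else 0

lemma hasSum_coprimeInvNormSum (Y : ℝ) :
    HasSum (fun s : Finset (HeightOneSpectrum (𝓞 K)) ↦
      (-1 : ℝ) ^ s.card * invNormSum (primeProd s) Y ^ 2) (coprimeInvNormSum K Y) := by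
  classical
  have hpair (e : 𝓞 K) (he : e ∈ normBall K Y) (f : 𝓞 K) :=
    (hasSum_neg_one_pow_card_mem_primeProd (mem_normBall.1 he).1 f).mul_right
      ((normAbs K e)⁻¹ * (normAbs K f)⁻¹)
  have htotal : coprimeInvNormSum K Y = ∑ e ∈ normBall K Y, ∑ f ∈ normBall K Y,
      (if IsCoprime e f then 1 else 0) * ((normAbs K e)⁻¹ * (normAbs K f)⁻¹) := by
    simp only [coprimeInvNormSum, ite_mul, one_mul, zero_mul]
  rw [htotal]
  refine (hasSum_sum fun e he ↦ hasSum_sum fun f _ ↦ hpair e he f).congr_fun fun s ↦ ?_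
  rw [invNormSum, Finset.sum_filter, sq, Finset.sum_mul_sum]
  simp only [Finset.mul_sum]
  refine Finset.sum_congr rfl fun e _ ↦ Finset.sum_congr rfl fun f _ ↦ ?_
  by_cases he : e ∈ primeProd s <;> by_cases hf : f ∈ primeProd s <;> simp [he, hf]

variable (K) in
theorem exists_abs_coprimeInvNormSum_sub_le :
    ∃ C : ℝ, 0 ≤ C ∧ ∀ Y : ℝ, 1 ≤ Y →
      |coprimeInvNormSum K Y - latticeDensity K ^ 2 * Real.log Y ^ 2 * (zetaKTwo K)⁻¹| ≤
        C * (1 + Real.log Y) := by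
  obtain ⟨A, hA, hle⟩ := exists_abs_absNorm_mul_invNormSum_sub_le K
  have hc := latticeDensity_pos (K := K)
  have hsummable := summable_comp_primeProd (f := fun I ↦ (Ideal.absNorm I : ℝ) ^ (-(3 / 2) : ℝ))
    (summable_absNorm_rpow_neg K (by norm_num))
  refine ⟨16 * A * (A + 2 * latticeDensity K) *
    ∑' s : Finset (HeightOneSpectrum (𝓞 K)), (Ideal.absNorm (primeProd s) : ℝ) ^ (-(3 / 2) : ℝ),
    mul_nonneg (by positivity) (tsum_nonneg fun s ↦ by positivity), fun Y hY ↦ ?_⟩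
  have hmain := ((summable_neg_one_pow_mul_inv_absNorm_primeProd_sq K).hasSum.mul_left
    (latticeDensity K ^ 2 * Real.log Y ^ 2))
  rw [tsum_neg_one_pow_mul_inv_absNorm_primeProd_sq] at hmain
  refine (((hasSum_coprimeInvNormSum Y).sub hmain).norm_le_of_bounded
    (hsummable.hasSum.mul_left (16 * A * (A + 2 * latticeDensity K) * (1 + Real.log Y)))
    fun s ↦ ?_).trans_eq (by ring)
  rw [mul_left_comm, ← mul_sub, norm_mul, norm_pow, norm_neg, norm_one, one_pow, one_mul,
    Real.norm_eq_abs]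
  have hn := absNorm_cast_pos (primeProd_ne_bot s)
  exact abs_sq_sub_mul_inv_sq_le_rpow (mod_cast hn) hc.le (Real.log_nonneg hY) hA
    (hle _ (primeProd_ne_bot s) Y hY)

end CoprimePairs

section DivisorPairs

lemma ncard_dvd_and_eq_of_forall_mul_eq {M : Type*} [CommMonoidWithZero M]
    [IsLeftCancelMulZero M] {x : M} (hx : x ≠ 0) {p q : M → Prop}
    (h : ∀ a b, a * b = x → (p a ↔ q b)) :
    {e | e ∣ x ∧ p e}.ncard = {e | e ∣ x ∧ q e}.ncard := by
  refine Set.ncard_congr (fun e he ↦ he.1.choose) (fun e he ↦ ?_) (fun a b ha hb hab ↦ ?_)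
    fun b hb ↦ ?_
  · have hmul := he.1.choose_spec
    exact ⟨⟨e, hmul.trans (mul_comm _ _)⟩, (h _ _ hmul.symm).1 he.2⟩
  · have hmul : a * ha.1.choose = b * ha.1.choose :=
      ha.1.choose_spec.symm.trans (hb.1.choose_spec.trans (congrArg (b * ·) hab.symm))
    rw [mul_comm a, mul_comm b] at hmul
    refine mul_left_cancel₀ (fun h0 ↦ hx ?_) hmul
    rw [ha.1.choose_spec, h0, mul_zero]
  · obtain ⟨⟨c, hc⟩, hq⟩ := hb
    have hcb : c * b = x := (mul_comm c b).trans hc.symm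
    have hcx : c ∣ x := ⟨b, hcb.symm⟩
    refine ⟨c, ⟨hcx, (h c b hcb).2 hq⟩, ?_⟩
    refine mul_left_cancel₀ (fun h0 ↦ hx ?_) (hcx.choose_spec.symm.trans hcb.symm)
    rw [← hcb, h0, zero_mul]

lemma isCoprime_of_dvd_of_dvd_add {R : Type*} [CommRing R] {e f u x : R} (hu : IsUnit u)
    (he : e ∣ x) (hf : f ∣ x + u) : IsCoprime e f := by
  have hxu : IsCoprime x u := (isCoprime_zero_left.2 hu).of_isCoprime_of_dvd_left (dvd_zero x)
  have hx := hxu.add_mul_left_right 1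
  rw [mul_one, add_comm] at hx
  exact (hx.of_isCoprime_of_dvd_left he).of_isCoprime_of_dvd_right hf

lemma exists_forall_sub_mem_span_mul_iff {R : Type*} [CommRing R] {e f : R} (h : IsCoprime e f)
    (u : R) :
    ∃ x₀, ∀ x, x - x₀ ∈ Ideal.span {e * f} ↔ e ∣ x ∧ f ∣ x + u := by
  obtain ⟨p, q, hpq⟩ := id h
  refine ⟨-(p * e * u), fun x ↦ ?_⟩
  have he : e ∣ x - -(p * e * u) ↔ e ∣ x := by
    rw [sub_neg_eq_add, dvd_add_left ⟨p * u, by ring⟩]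
  have hf : f ∣ x - -(p * e * u) ↔ f ∣ x + u := by
    rw [show x - -(p * e * u) = x + u + f * -(q * u) by linear_combination u * hpq,
      dvd_add_left (dvd_mul_right _ _)]
  rw [Ideal.mem_span_singleton, ← he, ← hf]
  exact ⟨fun hef ↦ ⟨dvd_of_mul_right_dvd hef, dvd_of_mul_left_dvd hef⟩,
    fun hef ↦ h.mul_dvd hef.1 hef.2⟩

lemma sum_card_filter_mul_card_filter {α β γ : Type*} (A : Finset α) (B : Finset β)
    (C : Finset γ) (p : β → α → Prop) (q : γ → α → Prop) [∀ e x, Decidable (p e x)]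
    [∀ f x, Decidable (q f x)] :
    ∑ x ∈ A, ({e ∈ B | p e x} : Finset β).card * ({f ∈ C | q f x} : Finset γ).card =
      ∑ e ∈ B, ∑ f ∈ C, ({x ∈ A | p e x ∧ q f x} : Finset α).card := by
  simp only [← Finset.card_product, ← Finset.filter_product]
  rw [← Finset.sum_product']
  exact Finset.sum_card_bipartiteAbove_eq_sum_card_bipartiteBelow
    fun x (ef : β × γ) ↦ p ef.1 x ∧ q ef.2 x

end DivisorPairs

section HyperbolaMethod

open NumberField

variable {K : Type*} [Field K] [NumberField K] [Algebra.IsQuadraticExtension ℚ K]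
  [IsTotallyComplex K]

open Classical in
/-- The nonzero divisors of `x` of norm at most `Y`. -/
noncomputable def smallDivisors (Y : ℝ) (x : 𝓞 K) : Finset (𝓞 K) :=
  {e ∈ normBall K Y | e ∣ x}

open Classical in
/-- The nonzero divisors `e` of `x` such that both `e` and the complementary divisor `x / e` have
norm at most `Y`. -/
noncomputable def balancedDivisors (Y : ℝ) (x : 𝓞 K) : Finset (𝓞 K) :=
  {e ∈ normBall K Y | e ∣ x ∧ normAbs K x ≤ Y * normAbs K e}

lemma balancedDivisors_subset (Y : ℝ) (x : 𝓞 K) : balancedDivisors Y x ⊆ smallDivisors Y x := by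
  classical
  exact Finset.monotone_filter_right _ fun _ _ he ↦ he.1

lemma coe_smallDivisors {Y : ℝ} {x : 𝓞 K} (hx : x ≠ 0) :
    (smallDivisors Y x : Set (𝓞 K)) = {e | e ∣ x ∧ normAbs K e ≤ Y} := by
  ext e
  have hne (he : e ∣ x) : e ≠ 0 := ne_zero_of_dvd_ne_zero hx he
  simp only [smallDivisors, Finset.coe_filter, mem_normBall, Set.mem_ofPred_eq]
  tauto

lemma coe_balancedDivisors {Y : ℝ} {x : 𝓞 K} (hx : x ≠ 0) :
    (balancedDivisors Y x : Set (𝓞 K)) = {e | e ∣ x ∧ normAbs K e ≤ Y} ∩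
      {e | e ∣ x ∧ normAbs K x ≤ Y * normAbs K e} := by
  ext e
  have hne (he : e ∣ x) : e ≠ 0 := ne_zero_of_dvd_ne_zero hx he
  simp only [balancedDivisors, Finset.coe_filter, mem_normBall, Set.mem_ofPred_eq,
    Set.mem_inter_iff]
  tauto

lemma finite_setOf_dvd {x : 𝓞 K} (hx : x ≠ 0) : {e | e ∣ x}.Finite := by
  refine (finite_normAbs_le K (normAbs K x)).subset ?_
  rintro e ⟨g, rfl⟩
  have hg := one_le_normAbs (right_ne_zero_of_mul hx)
  have he := normAbs_nonneg (e : K)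
  simp only [Set.mem_ofPred_eq, map_mul]
  nlinarith

theorem dK_add_card_balancedDivisors {Y : ℝ} (hY : 0 ≤ Y) {x : 𝓞 K} (hx : x ≠ 0)
    (hxY : normAbs K x ≤ Y ^ 2) :
    dK K x + (balancedDivisors Y x).card = 2 * (smallDivisors Y x).card := by
  have hunion : {e : 𝓞 K | e ≠ 0 ∧ e ∣ x} =
      {e | e ∣ x ∧ normAbs K e ≤ Y} ∪ {e | e ∣ x ∧ normAbs K x ≤ Y * normAbs K e} := by
    ext e
    have hne (he : e ∣ x) : e ≠ 0 := ne_zero_of_dvd_ne_zero hx he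
    have hor : normAbs K e ≤ Y ∨ normAbs K x ≤ Y * normAbs K e := by
      by_contra! h
      nlinarith [h.1, h.2]
    simp only [Set.mem_ofPred_eq, Set.mem_union]
    tauto
  have hcompl : {e : 𝓞 K | e ∣ x ∧ normAbs K e ≤ Y}.ncard =
      {e : 𝓞 K | e ∣ x ∧ normAbs K x ≤ Y * normAbs K e}.ncard := by
    refine ncard_dvd_and_eq_of_forall_mul_eq hx ?_
    rintro a b rfl
    have hb := normAbs_pos (RingOfIntegers.coe_ne_zero_iff.2 (right_ne_zero_of_mul hx))
    simp only [map_mul, mul_le_mul_iff_left₀ hb]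
  rw [dK, hunion, ← Set.ncard_coe_finset, ← Set.ncard_coe_finset, coe_smallDivisors hx,
    coe_balancedDivisors hx,
    Set.ncard_union_add_ncard_inter _ _ ((finite_setOf_dvd hx).subset fun _ he ↦ he.1)
      ((finite_setOf_dvd hx).subset fun _ he ↦ he.1), ← hcompl, two_mul]

end HyperbolaMethod

section ErrorTerms

open NumberField

variable {K : Type*} [Field K] [NumberField K]

lemma setOf_dvd_and_dvd_add_subset_image {e f u g₀ : 𝓞 K} (he : e ≠ 0) (hef : IsCoprime e f)
    (hg₀ : f ∣ e * g₀ + u) (Y : ℝ) :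
    {z : 𝓞 K | (e ∣ z ∧ normAbs K z ≤ Y * normAbs K e) ∧ f ∣ z + u} ⊆
      (e * ·) '' {g | g - g₀ ∈ Ideal.span {f} ∧ normAbs K g ≤ Y} := by
  rintro _ ⟨⟨⟨g, rfl⟩, hnorm⟩, hf⟩
  have hdvd : f ∣ e * (g - g₀) := by
    have := dvd_sub hf hg₀
    rwa [add_sub_add_right_eq_sub, ← mul_sub] at this
  refine ⟨g, ⟨Ideal.mem_span_singleton.2 (hef.symm.dvd_of_dvd_mul_left hdvd), ?_⟩, rfl⟩
  simp only [map_mul] at hnorm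
  rw [mul_comm] at hnorm
  exact le_of_mul_le_mul_right hnorm (normAbs_pos (RingOfIntegers.coe_ne_zero_iff.2 he))

variable (K) [Algebra.IsQuadraticExtension ℚ K] [IsTotallyComplex K]

lemma exists_ncard_coset_le :
    ∃ C : ℝ, 0 ≤ C ∧ ∀ I : Ideal (𝓞 K), I ≠ ⊥ → ∀ (c : 𝓞 K) (R : ℝ), Ideal.absNorm I ≤ R →
      {x : 𝓞 K | x - c ∈ I ∧ normAbs K x ≤ R}.ncard ≤ C * (R / Ideal.absNorm I) := by
  obtain ⟨C, hC, hcount⟩ := exists_abs_ncard_coset_sub_le K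
  have hc := latticeDensity_pos (K := K)
  refine ⟨latticeDensity K + 2 * C, by positivity, fun I hI c R hR ↦ ?_⟩
  have hn := absNorm_cast_pos hI
  have hone : 1 ≤ R / Ideal.absNorm I := (one_le_div₀ hn).2 hR
  have hsqrt : √(R / Ideal.absNorm I) ≤ R / Ideal.absNorm I :=
    Real.sqrt_le_left (by linarith) |>.2 (by nlinarith)
  nlinarith [(abs_le.1 (hcount I hI c R (hn.le.trans hR))).2]

lemma exists_card_normBall_le :
    ∃ C : ℝ, 0 ≤ C ∧ ∀ Y : ℝ, 1 ≤ Y → (normBall K Y).card ≤ C * Y := by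
  obtain ⟨C, hC, hcount⟩ := exists_ncard_coset_le K
  refine ⟨C, hC, fun Y hY ↦ ?_⟩
  have h := hcount ⊤ top_ne_bot 0 Y (by simpa using hY)
  rw [Ideal.absNorm_top, Nat.cast_one, div_one] at h
  refine le_trans ?_ h
  rw [Nat.cast_le, ← Set.ncard_coe_finset]
  exact Set.ncard_le_ncard (fun x hx ↦ ⟨Submodule.mem_top, (mem_normBall.1 hx).2⟩)
    ((finite_normAbs_le K Y).subset fun _ hx ↦ hx.2)

lemma exists_sum_inv_normAbs_le :
    ∃ C : ℝ, 0 ≤ C ∧ ∀ Y : ℝ, 1 ≤ Y →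
      ∑ e ∈ normBall K Y, (normAbs K e)⁻¹ ≤ C * (1 + Real.log Y) := by
  obtain ⟨A, hA, hle⟩ := exists_abs_absNorm_mul_invNormSum_sub_le K
  have hc := latticeDensity_pos (K := K)
  refine ⟨A + latticeDensity K, by positivity, fun Y hY ↦ ?_⟩
  have h := hle ⊤ top_ne_bot Y hY
  rw [Ideal.absNorm_top, Nat.cast_one, one_mul, Real.log_one, add_zero, mul_one,
    invNormSum_top] at h
  nlinarith [(abs_le.1 h).2, mul_nonneg hA (Real.log_nonneg hY)]

open Classical in
lemma exists_card_balanced_dvd_and_dvd_add_le :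
    ∃ C : ℝ, 0 ≤ C ∧ ∀ (Y : ℝ) (u : 𝓞 K), IsUnit u → ∀ A : Finset (𝓞 K),
      ∀ e ∈ normBall K Y, ∀ f ∈ normBall K Y,
        ({z ∈ A | (e ∣ z ∧ normAbs K z ≤ Y * normAbs K e) ∧ f ∣ z + u} : Finset (𝓞 K)).card ≤
          C * (Y * (normAbs K f)⁻¹) := by
  obtain ⟨C, hC, hcount⟩ := exists_ncard_coset_le K
  refine ⟨C, hC, fun Y u hu A e he f hf ↦ ?_⟩
  rw [mem_normBall] at he hf
  rcases Finset.eq_empty_or_nonempty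
    {z ∈ A | (e ∣ z ∧ normAbs K z ≤ Y * normAbs K e) ∧ f ∣ z + u} with hempty | ⟨z₀, hz₀⟩
  · have hY : 0 ≤ Y := (normAbs_nonneg _).trans hf.2
    have := normAbs_nonneg (f : K)
    rw [hempty, Finset.card_empty, Nat.cast_zero]
    positivity
  obtain ⟨-, ⟨hez₀, -⟩, hfz₀⟩ := Finset.mem_filter.1 hz₀
  have hef := isCoprime_of_dvd_of_dvd_add hu hez₀ hfz₀
  obtain ⟨g₀, rfl⟩ := hez₀
  have hbound := hcount (Ideal.span {f}) (by simpa using hf.1) g₀ Y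
    (by rw [← normAbs_eq_absNorm_span]; exact hf.2)
  rw [← normAbs_eq_absNorm_span, div_eq_mul_inv] at hbound
  refine le_trans ?_ hbound
  have hfin : {g : 𝓞 K | g - g₀ ∈ Ideal.span {f} ∧ normAbs K g ≤ Y}.Finite :=
    (finite_normAbs_le K Y).subset fun _ hg ↦ hg.2
  rw [Nat.cast_le, ← Set.ncard_coe_finset]
  calc _ ≤ ((e * ·) '' {g : 𝓞 K | g - g₀ ∈ Ideal.span {f} ∧ normAbs K g ≤ Y}).ncard :=
        Set.ncard_le_ncard (fun z hz ↦ setOf_dvd_and_dvd_add_subset_image he.1 hef hfz₀ Y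
          (Finset.mem_filter.1 hz).2) (hfin.image _)
    _ ≤ _ := Set.ncard_image_le hfin

theorem exists_sum_card_balancedDivisors_mul_card_smallDivisors_le :
    ∃ C : ℝ, 0 ≤ C ∧ ∀ Y : ℝ, 1 ≤ Y → ∀ u : 𝓞 K, IsUnit u → ∀ A : Finset (𝓞 K),
      ∑ z ∈ A, ((balancedDivisors Y z).card * (smallDivisors Y (z + u)).card : ℝ) ≤
        C * (Y ^ 2 * (1 + Real.log Y)) := by
  classical
  obtain ⟨C, hC, hcount⟩ := exists_card_balanced_dvd_and_dvd_add_le K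
  obtain ⟨C₁, hC₁, hcard⟩ := exists_card_normBall_le K
  obtain ⟨C₂, hC₂, hinv⟩ := exists_sum_inv_normAbs_le K
  refine ⟨C₁ * C * C₂, by positivity, fun Y hY u hu A ↦ ?_⟩
  have hinv_nonneg : 0 ≤ ∑ f ∈ normBall K Y, (normAbs K f)⁻¹ :=
    Finset.sum_nonneg fun f _ ↦ inv_nonneg.2 (normAbs_nonneg _)
  have hswap := sum_card_filter_mul_card_filter A (normBall K Y) (normBall K Y)
    (fun e z ↦ e ∣ z ∧ normAbs K z ≤ Y * normAbs K e) (fun f z ↦ f ∣ z + u)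
  calc ∑ z ∈ A, ((balancedDivisors Y z).card * (smallDivisors Y (z + u)).card : ℝ)
      = ∑ e ∈ normBall K Y, ∑ f ∈ normBall K Y,
          (({z ∈ A | (e ∣ z ∧ normAbs K z ≤ Y * normAbs K e) ∧ f ∣ z + u} :
            Finset (𝓞 K)).card : ℝ) := by exact_mod_cast hswap
    _ ≤ ∑ _e ∈ normBall K Y, ∑ f ∈ normBall K Y, C * (Y * (normAbs K f)⁻¹) :=
        Finset.sum_le_sum fun e he ↦ Finset.sum_le_sum fun f hf ↦ hcount Y u hu A e he f hf
    _ = (normBall K Y).card * (C * (Y * ∑ f ∈ normBall K Y, (normAbs K f)⁻¹)) := by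
        simp only [Finset.sum_const, nsmul_eq_mul, ← Finset.mul_sum]
    _ ≤ C₁ * Y * (C * (Y * (C₂ * (1 + Real.log Y)))) := by
        gcongr
        exacts [hcard Y hY, hinv Y hY]
    _ = C₁ * C * C₂ * (Y ^ 2 * (1 + Real.log Y)) := by ring

end ErrorTerms

section MainTerm

open NumberField

variable (K : Type*) [Field K] [NumberField K] [Algebra.IsQuadraticExtension ℚ K]
  [IsTotallyComplex K]

open Classical in
/-- The algebraic integers `x` of norm at most `X` for which both `x` and `x + 1` are nonzero. -/
noncomputable def summationRange (X : ℝ) : Finset (𝓞 K) :=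
  (normBall K X).erase (-1)

variable {K}

lemma mem_summationRange {X : ℝ} {x : 𝓞 K} :
    x ∈ summationRange K X ↔ x ≠ 0 ∧ x ≠ -1 ∧ normAbs K x ≤ X := by
  classical
  rw [summationRange, Finset.mem_erase, mem_normBall, and_left_comm]

lemma abs_card_filter_summationRange_sub_ncard_le (p : 𝓞 K → Prop) [DecidablePred p] (X : ℝ) :
    |(({x ∈ summationRange K X | p x} : Finset (𝓞 K)).card : ℝ) -
      {x : 𝓞 K | p x ∧ normAbs K x ≤ X}.ncard| ≤ 2 := by
  classical
  have hfin : {x : 𝓞 K | p x ∧ normAbs K x ≤ X}.Finite :=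
    (finite_normAbs_le K X).subset fun _ hx ↦ hx.2
  have hle : ({x ∈ summationRange K X | p x} : Finset (𝓞 K)).card ≤
      {x : 𝓞 K | p x ∧ normAbs K x ≤ X}.ncard := by
    rw [← Set.ncard_coe_finset]
    refine Set.ncard_le_ncard (fun x hx ↦ ?_) hfin
    rw [Finset.mem_coe, Finset.mem_filter, mem_summationRange] at hx
    exact ⟨hx.2, hx.1.2.2⟩
  have hge : {x : 𝓞 K | p x ∧ normAbs K x ≤ X}.ncard ≤
      ({x ∈ summationRange K X | p x} : Finset (𝓞 K)).card + 2 := by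
    have hsub : {x : 𝓞 K | p x ∧ normAbs K x ≤ X} ⊆
        ({x ∈ summationRange K X | p x} ∪ {0, -1} : Finset (𝓞 K)) := by
      intro x hx
      rw [Finset.mem_coe, Finset.mem_union, Finset.mem_filter, mem_summationRange,
        Finset.mem_insert, Finset.mem_singleton]
      have := hx.1
      have := hx.2
      tauto
    refine (Set.ncard_le_ncard hsub (Finset.finite_toSet _)).trans ?_
    rw [Set.ncard_coe_finset]
    exact (Finset.card_union_le _ _).trans (by gcongr; exact Finset.card_le_two)
  rify at hle hge
  rw [abs_le]
  constructor <;> linarith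

variable (K)

open Classical in
lemma exists_abs_card_dvd_and_dvd_add_one_sub_le_of_isCoprime :
    ∃ C : ℝ, 0 ≤ C ∧ ∀ X : ℝ, 0 ≤ X → ∀ e f : 𝓞 K, e ≠ 0 → f ≠ 0 → IsCoprime e f →
      |({x ∈ summationRange K X | e ∣ x ∧ f ∣ x + 1} : Finset (𝓞 K)).card -
        latticeDensity K * X * ((normAbs K e)⁻¹ * (normAbs K f)⁻¹)| ≤
          C * (√X * ((normAbs K e)⁻¹ + (normAbs K f)⁻¹) + 1) := by
  obtain ⟨C, hC, hcount⟩ := exists_abs_ncard_coset_sub_le K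
  refine ⟨C + 2, by positivity, fun X hX e f he hf hef ↦ ?_⟩
  obtain ⟨x₀, hx₀⟩ := exists_forall_sub_mem_span_mul_iff hef 1
  have hcoset := hcount (Ideal.span {e * f}) (by simp [he, hf]) x₀ X hX
  rw [← normAbs_eq_absNorm_span] at hcoset
  simp only [hx₀, map_mul, div_eq_mul_inv, mul_inv] at hcoset
  have hrange := abs_card_filter_summationRange_sub_ncard_le (fun x ↦ e ∣ x ∧ f ∣ x + 1) X
  have ha := inv_nonneg.2 (normAbs_nonneg (e : K))
  have hb := inv_nonneg.2 (normAbs_nonneg (f : K))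
  set a := (normAbs K e)⁻¹
  set b := (normAbs K f)⁻¹
  have hsqrt : √(X * (a * b)) ≤ √X * (a + b) := by
    rw [Real.sqrt_mul hX]
    gcongr
    exact (Real.sqrt_le_left (by positivity)).2 (by nlinarith)
  calc _ ≤ 2 + C * (√(X * (a * b)) + 1) := by
        rw [mul_assoc]
        exact (abs_sub_le _ _ _).trans (add_le_add hrange hcoset)
    _ ≤ 2 * (√X * (a + b) + 1) + C * (√X * (a + b) + 1) := by
        have : 0 ≤ √X * (a + b) := by positivity
        gcongr
        linarith
    _ = (C + 2) * (√X * (a + b) + 1) := by ring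

open Classical in
lemma exists_abs_card_dvd_and_dvd_add_one_sub_le :
    ∃ C : ℝ, 0 ≤ C ∧ ∀ X : ℝ, 0 ≤ X → ∀ e f : 𝓞 K, e ≠ 0 → f ≠ 0 →
      |({x ∈ summationRange K X | e ∣ x ∧ f ∣ x + 1} : Finset (𝓞 K)).card -
        latticeDensity K * X *
          (if IsCoprime e f then (normAbs K e)⁻¹ * (normAbs K f)⁻¹ else 0)| ≤
          C * (√X * ((normAbs K e)⁻¹ + (normAbs K f)⁻¹) + 1) := by
  obtain ⟨C, hC, hcount⟩ := exists_abs_card_dvd_and_dvd_add_one_sub_le_of_isCoprime K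
  refine ⟨C, hC, fun X hX e f he hf ↦ ?_⟩
  by_cases hef : IsCoprime e f
  · rw [if_pos hef]
    exact hcount X hX e f he hf hef
  · have hempty : ({x ∈ summationRange K X | e ∣ x ∧ f ∣ x + 1} : Finset (𝓞 K)) = ∅ :=
      Finset.filter_false_of_mem fun x _ h ↦
        hef (isCoprime_of_dvd_of_dvd_add isUnit_one h.1 h.2)
    have := normAbs_nonneg (e : K)
    have := normAbs_nonneg (f : K)
    rw [if_neg hef, hempty, Finset.card_empty, Nat.cast_zero, mul_zero, sub_zero, abs_zero]
    positivity

theorem exists_abs_sum_card_smallDivisors_mul_sub_le :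
    ∃ C : ℝ, 0 ≤ C ∧ ∀ X Y : ℝ, 0 ≤ X → √X ≤ Y → 1 ≤ Y →
      |∑ x ∈ summationRange K X, ((smallDivisors Y x).card * (smallDivisors Y (x + 1)).card : ℝ) -
        latticeDensity K * X * coprimeInvNormSum K Y| ≤ C * (Y ^ 2 * (1 + Real.log Y)) := by
  classical
  obtain ⟨C, hC, hcount⟩ := exists_abs_card_dvd_and_dvd_add_one_sub_le K
  obtain ⟨C₁, hC₁, hcard⟩ := exists_card_normBall_le K
  obtain ⟨C₂, hC₂, hinv⟩ := exists_sum_inv_normAbs_le K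
  refine ⟨C * (2 * C₁ * C₂ + C₁ ^ 2), by positivity, fun X Y hX hXY hY ↦ ?_⟩
  have hlog := Real.log_nonneg hY
  have hinv_nonneg : 0 ≤ ∑ f ∈ normBall K Y, (normAbs K f)⁻¹ :=
    Finset.sum_nonneg fun f _ ↦ inv_nonneg.2 (normAbs_nonneg _)
  have hswap : ∑ x ∈ summationRange K X,
      ((smallDivisors Y x).card * (smallDivisors Y (x + 1)).card : ℝ) =
        ∑ e ∈ normBall K Y, ∑ f ∈ normBall K Y,
          (({x ∈ summationRange K X | e ∣ x ∧ f ∣ x + 1} : Finset (𝓞 K)).card : ℝ) :=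
    mod_cast sum_card_filter_mul_card_filter (summationRange K X) (normBall K Y) (normBall K Y)
      (fun e x ↦ e ∣ x) (fun f x ↦ f ∣ x + 1)
  rw [hswap, coprimeInvNormSum]
  simp only [Finset.mul_sum, ← Finset.sum_sub_distrib]
  calc _ ≤ ∑ e ∈ normBall K Y, ∑ f ∈ normBall K Y,
          C * (√X * ((normAbs K e)⁻¹ + (normAbs K f)⁻¹) + 1) := by
        refine (Finset.abs_sum_le_sum_abs _ _).trans (Finset.sum_le_sum fun e he ↦ ?_)
        refine (Finset.abs_sum_le_sum_abs _ _).trans (Finset.sum_le_sum fun f hf ↦ ?_)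
        exact hcount X hX e f (mem_normBall.1 he).1 (mem_normBall.1 hf).1
    _ = C * (√X * (2 * ((normBall K Y).card * ∑ e ∈ normBall K Y, (normAbs K e)⁻¹)) +
          (normBall K Y).card ^ 2) := by
        simp only [← Finset.mul_sum, Finset.sum_add_distrib, Finset.sum_const, nsmul_eq_mul]
        ring
    _ ≤ C * (Y * (2 * (C₁ * Y * (C₂ * (1 + Real.log Y)))) + (C₁ * Y) ^ 2) := by
        gcongr
        exacts [hcard Y hY, hinv Y hY, hcard Y hY]
    _ ≤ C * (2 * C₁ * C₂ + C₁ ^ 2) * (Y ^ 2 * (1 + Real.log Y)) := by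
        have : 0 ≤ C * (C₁ ^ 2 * Y ^ 2 * Real.log Y) := by positivity
        nlinarith

end MainTerm

section Asymptotics

lemma abs_mul_sub_four_mul_le {d d' r r' a a' : ℝ} (h : d + r = 2 * a) (h' : d' + r' = 2 * a')
    (hr : 0 ≤ r) (hr' : 0 ≤ r') (hra : r ≤ a) (hra' : r' ≤ a') :
    |d * d' - 4 * (a * a')| ≤ 2 * (r * a') + 2 * (r' * a) := by
  obtain rfl := eq_sub_of_add_eq h
  obtain rfl := eq_sub_of_add_eq h'
  have hrr' := mul_nonneg hr hr'
  have hra_mul := mul_nonneg hr (hr'.trans hra')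
  rw [abs_le]
  constructor <;> nlinarith [mul_nonneg hr' (sub_nonneg.2 hra)]

lemma log_sqrt_add_one_sub_mem_Icc {X : ℝ} (hX : 1 ≤ X) :
    Real.log (√X + 1) - Real.log X / 2 ∈ Set.Icc 0 1 := by
  have hsqrt : 1 ≤ √X := Real.one_le_sqrt.2 hX
  rw [← Real.log_sqrt (by linarith), ← Real.log_div (by linarith) (by linarith), add_div,
    div_self (by linarith)]
  have hpos : 0 < 1 / √X := by positivity
  have hle : 1 / √X ≤ 1 := (div_le_one₀ (by linarith)).2 hsqrt
  exact ⟨Real.log_nonneg (by linarith),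
    (Real.log_le_sub_one_of_pos (by linarith)).trans (by linarith)⟩

lemma abs_four_mul_log_sqrt_add_one_sq_sub_le {X : ℝ} (hX : Real.exp 1 ≤ X) :
    |4 * Real.log (√X + 1) ^ 2 - Real.log X ^ 2| ≤ 8 * Real.log X := by
  have hX1 : 1 ≤ X := (Real.one_le_exp zero_le_one).trans hX
  have hlog : 1 ≤ Real.log X := (Real.le_log_iff_exp_le (by linarith)).2 hX
  obtain ⟨hδ0, hδ1⟩ := log_sqrt_add_one_sub_mem_Icc hX1
  rw [abs_le]
  constructor <;> nlinarith

open NumberField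

variable {K : Type*} [Field K] [NumberField K]

lemma latticeDensity_pow_three :
    latticeDensity K ^ 3 = 8 * Real.pi ^ 3 / |(discr K : ℝ)| ^ ((3 : ℝ) / 2) := by
  have hsqrt : |(discr K : ℝ)| ^ ((3 : ℝ) / 2) = √|(discr K : ℝ)| ^ 3 := by
    rw [Real.sqrt_eq_rpow, ← Real.rpow_natCast, ← Real.rpow_mul (abs_nonneg _)]
    norm_num
  rw [hsqrt, latticeDensity, div_pow, mul_pow]
  norm_num

lemma zetaKTwo_nonneg : 0 ≤ zetaKTwo K :=
  tsum_nonneg fun _ ↦ by positivity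

variable [Algebra.IsQuadraticExtension ℚ K] [IsTotallyComplex K]

lemma normAbs_add_one_le_of_mem_summationRange {X : ℝ} {x : 𝓞 K} (hx : x ∈ summationRange K X) :
    normAbs K (x + 1 : 𝓞 K) ≤ (√X + 1) ^ 2 := by
  have hsqrt : √(normAbs K x) ≤ √X := Real.sqrt_le_sqrt (mem_summationRange.1 hx).2.2
  have htri := sqrt_normAbs_add_le (x : K) 1
  rw [map_one, Real.sqrt_one] at htri
  rw [← Real.sqrt_le_left (by positivity)]
  push_cast
  linarith

lemma abs_dK_mul_dK_add_one_sub_le {X : ℝ} (hX : 0 ≤ X) {x : 𝓞 K} (hx : x ∈ summationRange K X) :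
    |(dK K x * dK K (x + 1) : ℝ) - 4 * ((smallDivisors (√X + 1) x).card *
        (smallDivisors (√X + 1) (x + 1)).card)| ≤
      2 * ((balancedDivisors (√X + 1) x).card * (smallDivisors (√X + 1) (x + 1)).card) +
        2 * ((balancedDivisors (√X + 1) (x + 1)).card * (smallDivisors (√X + 1) x).card) := by
  obtain ⟨hx0, hx1, hxX⟩ := mem_summationRange.1 hx
  have hsqrt := Real.sqrt_nonneg X
  have hY : 0 ≤ √X + 1 := by positivity
  have hnorm : normAbs K x ≤ (√X + 1) ^ 2 := by nlinarith [Real.sq_sqrt hX]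
  have hsplit := dK_add_card_balancedDivisors hY hx0 hnorm
  have hsplit' := dK_add_card_balancedDivisors hY (fun h ↦ hx1 (eq_neg_of_add_eq_zero_left h))
    (normAbs_add_one_le_of_mem_summationRange hx)
  exact abs_mul_sub_four_mul_le (mod_cast hsplit) (mod_cast hsplit') (Nat.cast_nonneg _)
    (Nat.cast_nonneg _) (mod_cast Finset.card_le_card (balancedDivisors_subset _ _))
    (mod_cast Finset.card_le_card (balancedDivisors_subset _ _))

variable (K)

lemma exists_abs_sum_dK_mul_dK_sub_four_mul_sum_card_smallDivisors_le :
    ∃ C : ℝ, 0 ≤ C ∧ ∀ X : ℝ, 0 ≤ X →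
      |∑ x ∈ summationRange K X, (dK K x * dK K (x + 1) : ℝ) -
        4 * ∑ x ∈ summationRange K X, ((smallDivisors (√X + 1) x).card *
          (smallDivisors (√X + 1) (x + 1)).card : ℝ)| ≤
            C * ((√X + 1) ^ 2 * (1 + Real.log (√X + 1))) := by
  classical
  obtain ⟨C, hC, hbal⟩ := exists_sum_card_balancedDivisors_mul_card_smallDivisors_le K
  refine ⟨4 * C, by positivity, fun X hX ↦ ?_⟩
  have hY : 1 ≤ √X + 1 := le_add_of_nonneg_left (Real.sqrt_nonneg X)
  have hbal_left := hbal (√X + 1) hY 1 isUnit_one (summationRange K X)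
  have hbal_right := hbal (√X + 1) hY (-1) isUnit_one.neg ((summationRange K X).image (· + 1))
  rw [Finset.sum_image fun x _ y _ h ↦ add_right_cancel h] at hbal_right
  simp only [add_neg_cancel_right] at hbal_right
  rw [Finset.mul_sum, ← Finset.sum_sub_distrib]
  refine (Finset.abs_sum_le_sum_abs _ _).trans
    ((Finset.sum_le_sum fun x hx ↦ abs_dK_mul_dK_add_one_sub_le hX hx).trans ?_)
  rw [Finset.sum_add_distrib, ← Finset.mul_sum, ← Finset.mul_sum]
  linarith

lemma exists_abs_sum_dK_mul_dK_sub_coprimeInvNormSum_le :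
    ∃ C : ℝ, 0 ≤ C ∧ ∀ X : ℝ, 0 ≤ X →
      |∑ x ∈ summationRange K X, (dK K x * dK K (x + 1) : ℝ) -
        4 * (latticeDensity K * X * coprimeInvNormSum K (√X + 1))| ≤
          C * ((√X + 1) ^ 2 * (1 + Real.log (√X + 1))) := by
  obtain ⟨C, hC, hsplit⟩ := exists_abs_sum_dK_mul_dK_sub_four_mul_sum_card_smallDivisors_le K
  obtain ⟨C', hC', hsmall⟩ := exists_abs_sum_card_smallDivisors_mul_sub_le K
  refine ⟨C + 4 * C', by positivity, fun X hX ↦ ?_⟩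
  have hY : 1 ≤ √X + 1 := le_add_of_nonneg_left (Real.sqrt_nonneg X)
  have hmain := hsmall X (√X + 1) hX (by linarith) hY
  refine (abs_sub_le _ _ _).trans ((add_le_add_left (hsplit X hX) _).trans ?_)
  rw [← mul_sub, abs_mul, abs_of_nonneg (by norm_num : (0 : ℝ) ≤ 4)]
  linarith

lemma exists_abs_four_mul_coprimeInvNormSum_sub_le :
    ∃ C : ℝ, 0 ≤ C ∧ ∀ X : ℝ, Real.exp 1 ≤ X →
      |4 * coprimeInvNormSum K (√X + 1) -
        latticeDensity K ^ 2 * Real.log X ^ 2 * (zetaKTwo K)⁻¹| ≤ C * Real.log X := by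
  obtain ⟨C, hC, hcoprime⟩ := exists_abs_coprimeInvNormSum_sub_le K
  have hz := inv_nonneg.2 (zetaKTwo_nonneg (K := K))
  refine ⟨12 * C + 8 * latticeDensity K ^ 2 * (zetaKTwo K)⁻¹, by positivity, fun X hX ↦ ?_⟩
  have hX1 : 1 ≤ X := (Real.one_le_exp zero_le_one).trans hX
  have hlogX : 1 ≤ Real.log X := (Real.le_log_iff_exp_le (by linarith)).2 hX
  have hY := hcoprime (√X + 1) (le_add_of_nonneg_left (Real.sqrt_nonneg X))
  have hlogY : 1 + Real.log (√X + 1) ≤ 3 * Real.log X := by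
    linarith [(log_sqrt_add_one_sub_mem_Icc hX1).2]
  calc _ = |4 * (coprimeInvNormSum K (√X + 1) -
          latticeDensity K ^ 2 * Real.log (√X + 1) ^ 2 * (zetaKTwo K)⁻¹) +
        latticeDensity K ^ 2 * (zetaKTwo K)⁻¹ *
          (4 * Real.log (√X + 1) ^ 2 - Real.log X ^ 2)| := by
        congr 1
        ring
    _ ≤ 4 * (C * (3 * Real.log X)) +
          latticeDensity K ^ 2 * (zetaKTwo K)⁻¹ * (8 * Real.log X) := by
        refine (abs_add_le _ _).trans (add_le_add ?_ ?_)
        · rw [abs_mul, abs_of_nonneg (by norm_num : (0 : ℝ) ≤ 4)]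
          gcongr
          exact hY.trans (by gcongr)
        · rw [abs_mul, abs_of_nonneg (by positivity)]
          gcongr
          exact abs_four_mul_log_sqrt_add_one_sq_sub_le hX
    _ = (12 * C + 8 * latticeDensity K ^ 2 * (zetaKTwo K)⁻¹) * Real.log X := by ring

theorem exists_abs_sum_dK_mul_dK_sub_le :
    ∃ C : ℝ, 0 ≤ C ∧ ∀ X : ℝ, Real.exp 1 ≤ X →
      |∑ x ∈ summationRange K X, (dK K x * dK K (x + 1) : ℝ) -
        latticeDensity K ^ 3 * (zetaKTwo K)⁻¹ * X * Real.log X ^ 2| ≤ C * (X * Real.log X) := by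
  obtain ⟨C, hC, hsum⟩ := exists_abs_sum_dK_mul_dK_sub_coprimeInvNormSum_le K
  obtain ⟨C', hC', hcoprime⟩ := exists_abs_four_mul_coprimeInvNormSum_sub_le K
  have hc := latticeDensity_pos (K := K)
  refine ⟨12 * C + latticeDensity K * C', by positivity, fun X hX ↦ ?_⟩
  have hX1 : 1 ≤ X := (Real.one_le_exp zero_le_one).trans hX
  have hlogX : 1 ≤ Real.log X := (Real.le_log_iff_exp_le (by linarith)).2 hX
  have hsqrt : 1 ≤ √X := Real.one_le_sqrt.2 hX1
  have hY : 1 ≤ √X + 1 := by linarith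
  have hY2 : (√X + 1) ^ 2 ≤ 4 * X := by nlinarith [Real.sq_sqrt (by linarith : 0 ≤ X)]
  have hlogY : 1 + Real.log (√X + 1) ≤ 3 * Real.log X := by
    linarith [(log_sqrt_add_one_sub_mem_Icc hX1).2]
  calc _ ≤ _ + |latticeDensity K * X * (4 * coprimeInvNormSum K (√X + 1) -
          latticeDensity K ^ 2 * Real.log X ^ 2 * (zetaKTwo K)⁻¹)| := by
        refine (abs_sub_le _ _ _).trans (add_le_add (hsum X (by linarith)) (le_of_eq ?_))
        congr 1
        ring
    _ ≤ C * (4 * X * (3 * Real.log X)) + latticeDensity K * X * (C' * Real.log X) := by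
        rw [abs_mul, abs_of_nonneg (by positivity : 0 ≤ latticeDensity K * X)]
        gcongr
        exacts [by linarith [Real.log_nonneg hY], hcoprime X hX]
    _ = (12 * C + latticeDensity K * C') * (X * Real.log X) := by ring

lemma tsum_eq_sum_summationRange (X : ℝ) (g : 𝓞 K → ℝ) :
    ∑' x : {x : 𝓞 K // x ≠ 0 ∧ x ≠ -1 ∧ (|Algebra.norm ℚ (x : K)| : ℝ) ≤ X}, g x =
      ∑ x ∈ summationRange K X, g x := by
  rw [← Finset.tsum_subtype (summationRange K X) g]
  exact ((Equiv.subtypeEquivRight fun _ ↦ mem_summationRange).tsum_eq (g ·.1)).symm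

end Asymptotics

/-- Theorem 2: for an imaginary quadratic number field `K`, as `X → +∞`,
`∑_{x ∈ 𝓞_K ∖ {0,-1}, |N(x)| ≤ X} d_K(x) d_K(x+1)
  = (8π³/(|D_K|^{3/2} ζ_K(2))) · X (log X)² + O(X log X)`. -/
theorem binary_additive_divisor_imaginary_quadratic (K : Type*) [Field K] [NumberField K]
    (hdeg : Module.finrank ℚ K = 2) (himag : IsEmpty (K →+* ℝ)) :
    (fun X : ℝ =>
        (∑' x : {x : 𝓞 K // x ≠ 0 ∧ x ≠ -1 ∧ (|Algebra.norm ℚ (x : K)| : ℝ) ≤ X},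
            (dK K x.1 * dK K (x.1 + 1) : ℝ)) -
          8 * Real.pi ^ 3 /
              ((|NumberField.discr K| : ℝ) ^ ((3 : ℝ) / 2) * zetaKTwo K) *
            X * Real.log X ^ 2)
      =O[Filter.atTop] fun X : ℝ => X * Real.log X := by
  have : Algebra.IsQuadraticExtension ℚ K := { finrank_eq_two' := hdeg }
  have : NumberField.IsTotallyComplex K :=
    ⟨fun w ↦ NumberField.InfinitePlace.not_isReal_iff_isComplex.1 fun hw ↦
      himag.false (NumberField.InfinitePlace.embedding_of_isReal hw)⟩
  obtain ⟨C, -, hle⟩ := exists_abs_sum_dK_mul_dK_sub_le K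
  refine Asymptotics.IsBigO.of_bound C ?_
  filter_upwards [Filter.eventually_ge_atTop (Real.exp 1)] with X hX
  have hX1 : 1 ≤ X := (Real.one_le_exp zero_le_one).trans hX
  have hlog := Real.log_nonneg hX1
  rw [tsum_eq_sum_summationRange K X fun x ↦ (dK K x * dK K (x + 1) : ℝ), ← div_div,
    ← latticeDensity_pow_three, Real.norm_eq_abs, Real.norm_of_nonneg (by positivity),
    div_eq_mul_inv]
  exact hle X hX
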